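/- arXiv:1409.7423 — 4 statements merged into one kernel-verified Lean document; each statement's English description precedes it below -/
import Mathlib

section
/- Cartesian Rellich lemma (the paper's Lemma 2): Let E ∈ ℝ and let Ω ⊂ ℝ² be a bounded set such that ℝ² ∖ closure(Ω) is connected. Suppose u : ℝ² → ℂ is twice continuously differentiable on ℝ² ∖ closure(Ω) and satisfies the gravity Helmholtz equation ∂²u/∂x₁² + ∂²u/∂x₂² + (E + x₂)·u = 0 there, and suppose lim_{x₂→+∞} √(E + x₂) · ∫_ℝ |u(x₁,x₂)|² dx₁ = 0 (in particular, ∫_ℝ |u(x₁,x₂)|² dx₁ is finite for all sufficiently large x₂). Then u = 0 everywhere on ℝ² ∖ closure(Ω). -/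
open MeasureTheory Filter Topology

noncomputable def pd1 (u : ℝ × ℝ → ℂ) (p : ℝ × ℝ) : ℂ :=
  deriv (fun t : ℝ => u (t, p.2)) p.1

noncomputable def pd2 (u : ℝ × ℝ → ℂ) (p : ℝ × ℝ) : ℂ :=
  deriv (fun t : ℝ => u (p.1, t)) p.2

noncomputable def pd11 (u : ℝ × ℝ → ℂ) (p : ℝ × ℝ) : ℂ :=
  deriv (fun t : ℝ => pd1 u (t, p.2)) p.1

noncomputable def pd22 (u : ℝ × ℝ → ℂ) (p : ℝ × ℝ) : ℂ :=
  deriv (fun t : ℝ => pd2 u (p.1, t)) p.2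

/-- The gravity Helmholtz equation `Δu + (E + x₂) u = 0` holds at the point `p`. -/
def GravityHelmholtzAt (E : ℝ) (u : ℝ × ℝ → ℂ) (p : ℝ × ℝ) : Prop :=
  pd11 u p + pd22 u p + ((E + p.2 : ℝ) : ℂ) * u p = 0



/-- Power series with coefficients bounded by `1 / m!`. -/
noncomputable def airyPS (c : ℕ → ℝ) (w : ℝ) : ℝ := ∑' m, c m * w ^ m

lemma airyPS_summable {c : ℕ → ℝ} (hc : ∀ m, |c m| ≤ 1 / (m.factorial : ℝ)) (w : ℝ) :
    Summable (fun m => c m * w ^ m) := by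
  refine Summable.of_norm_bounded (Real.summable_pow_div_factorial |w|) fun m => ?_
  rw [norm_mul, norm_pow, Real.norm_eq_abs, Real.norm_eq_abs]
  calc |c m| * |w| ^ m ≤ 1 / (m.factorial : ℝ) * |w| ^ m := by gcongr; exact hc m
    _ = _ := by ring

lemma airyPS_deriv_bound {c : ℕ → ℝ} (hc : ∀ m, |c m| ≤ 1 / (m.factorial : ℝ)) (m : ℕ) :
    |((m : ℝ) + 1) * c (m + 1)| ≤ 1 / (m.factorial : ℝ) := by
  rw [abs_mul, abs_of_nonneg (by positivity : (0:ℝ) ≤ (m:ℝ) + 1)]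
  calc ((m : ℝ) + 1) * |c (m+1)| ≤ ((m : ℝ) + 1) * (1 / ((m+1).factorial : ℝ)) := by
        gcongr; exact hc _
    _ = _ := by
      rw [Nat.factorial_succ]; push_cast
      have : (m.factorial : ℝ) ≠ 0 := by positivity
      field_simp

lemma airyPS_hasDerivAt {c : ℕ → ℝ} (hc : ∀ m, |c m| ≤ 1 / (m.factorial : ℝ)) (w : ℝ) :
    HasDerivAt (airyPS c) (airyPS (fun m => ((m : ℝ) + 1) * c (m + 1)) w) w := by
  set R := |w| + 1 with hR
  have hRpos : 0 < R := by positivity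
  have hw : w ∈ Metric.ball (0:ℝ) R := by simp [hR]
  have key := hasDerivAt_tsum_of_isPreconnected (𝕜 := ℝ) (F := ℝ)
    (u := fun m : ℕ => |(m : ℝ) * c m * R ^ (m - 1)|)
    (g := fun (m : ℕ) z => c m * z ^ m) (g' := fun (m : ℕ) z => (m : ℝ) * c m * z ^ (m - 1))
    (t := Metric.ball (0:ℝ) R) (y₀ := w) (y := w) ?_ Metric.isOpen_ball
    (convex_ball _ _).isPreconnected ?_ ?_ hw (airyPS_summable hc w) hw
  · have hs : Summable (fun m : ℕ => (m : ℝ) * c m * w ^ (m - 1)) := by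
      rw [← summable_nat_add_iff 1]
      simpa using airyPS_summable (airyPS_deriv_bound hc) w
    rw [hs.tsum_eq_zero_add] at key
    have e : airyPS (fun m => ((m : ℝ) + 1) * c (m + 1)) w
        = ((0 : ℕ) : ℝ) * c 0 * w ^ (0 - 1)
          + ∑' (b : ℕ), (((b + 1 : ℕ) : ℝ) * c (b + 1) * w ^ (b + 1 - 1)) := by
      simp [airyPS]
    rw [e]
    exact key
  · rw [← summable_nat_add_iff 1]
    have := (airyPS_summable (airyPS_deriv_bound hc) R).abs
    simpa using this
  · intro m y _
    have := (hasDerivAt_pow m y).const_mul (c m)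
    refine this.congr_deriv ?_
    ring
  · intro m y hy
    have hy' : |y| ≤ R := by
      have := hy
      simp at this
      exact this.le
    rw [Real.norm_eq_abs, abs_mul, abs_mul _ (R ^ (m-1)), abs_pow, abs_pow, abs_of_pos hRpos]
    gcongr

noncomputable def airyC1 : ℕ → ℝ
  | 0 => 1
  | m + 1 => - airyC1 m / (3 * ((m : ℝ) + 1) * (3 * m + 2))

noncomputable def airyC2 : ℕ → ℝ
  | 0 => 1
  | m + 1 => - airyC2 m / (3 * ((m : ℝ) + 1) * (3 * m + 4))

lemma airyC1_bound (m : ℕ) : |airyC1 m| ≤ 1 / (m.factorial : ℝ) := by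
  induction m with
  | zero => simp [airyC1]
  | succ m ih =>
    rw [airyC1, abs_div, abs_neg, abs_of_pos (by positivity : (0:ℝ) < 3 * ((m : ℝ) + 1) * (3 * m + 2)),
      Nat.factorial_succ]
    push_cast
    rw [div_le_div_iff₀ (by positivity) (by positivity)]
    have hf : (0:ℝ) < m.factorial := by positivity
    rw [le_div_iff₀ hf] at ih
    have hm : (0:ℝ) ≤ m := by positivity
    have : |airyC1 m| * (((m:ℝ) + 1) * m.factorial) = (|airyC1 m| * m.factorial) * (m+1) := by ring
    rw [this]
    calc (|airyC1 m| * m.factorial) * (m+1) ≤ 1 * ((m:ℝ)+1) := by gcongr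
      _ ≤ _ := by nlinarith

lemma airyC2_bound (m : ℕ) : |airyC2 m| ≤ 1 / (m.factorial : ℝ) := by
  induction m with
  | zero => simp [airyC2]
  | succ m ih =>
    rw [airyC2, abs_div, abs_neg, abs_of_pos (by positivity : (0:ℝ) < 3 * ((m : ℝ) + 1) * (3 * m + 4)),
      Nat.factorial_succ]
    push_cast
    rw [div_le_div_iff₀ (by positivity) (by positivity)]
    have hf : (0:ℝ) < m.factorial := by positivity
    rw [le_div_iff₀ hf] at ih
    have hm : (0:ℝ) ≤ m := by positivity
    have : |airyC2 m| * (((m:ℝ) + 1) * m.factorial) = (|airyC2 m| * m.factorial) * (m+1) := by ring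
    rw [this]
    calc (|airyC2 m| * m.factorial) * (m+1) ≤ 1 * ((m:ℝ)+1) := by gcongr
      _ ≤ _ := by nlinarith

/-- second order relation for the power series -/
lemma airyPS_ode {c : ℕ → ℝ} (hc : ∀ m, |c m| ≤ 1 / (m.factorial : ℝ)) (b : ℝ)
    (hrec : ∀ m : ℕ, (9 * m + b) * (((m:ℝ) + 1) * c (m+1)) = - c m) (w : ℝ) :
    9 * w * airyPS (fun m => ((m : ℝ) + 1) * (((m + 1 : ℕ) : ℝ) + 1) * c (m + 1 + 1)) w
      + b * airyPS (fun m => ((m : ℝ) + 1) * c (m + 1)) w = - airyPS c w := by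
  have h1 := airyPS_deriv_bound hc
  have h2 := airyPS_deriv_bound h1
  have s0 := airyPS_summable hc w
  have s1 := airyPS_summable h1 w
  have s2 := airyPS_summable h2 w
  have e1 : 9 * w * airyPS (fun m => ((m : ℝ) + 1) * (((m + 1 : ℕ) : ℝ) + 1) * c (m + 1 + 1)) w
      = ∑' m : ℕ, 9 * (m : ℝ) * (((m:ℝ) + 1) * c (m+1)) * w ^ m := by
    have hs : Summable (fun m : ℕ => 9 * (m : ℝ) * (((m:ℝ) + 1) * c (m+1)) * w ^ m) := by
      rw [← summable_nat_add_iff 1]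
      refine (s2.mul_left (9 * w)).congr fun m => ?_
      push_cast; ring
    rw [hs.tsum_eq_zero_add, airyPS, ← tsum_mul_left]
    simp only [Nat.cast_zero, mul_zero, zero_mul, zero_add]
    congr 1; ext m; push_cast; ring
  have hs : Summable (fun m : ℕ => 9 * (m : ℝ) * (((m:ℝ) + 1) * c (m+1)) * w ^ m) := by
      rw [← summable_nat_add_iff 1]
      refine (s2.mul_left (9 * w)).congr fun m => ?_
      push_cast; ring
  rw [e1, airyPS, airyPS, ← tsum_mul_left, ← hs.tsum_add (s1.mul_left b), ← tsum_neg]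
  congr 1; ext m
  have := hrec m
  linear_combination w ^ m * this

lemma airy_exists : ∃ Y1 Z1 Y2 Z2 : ℝ → ℝ,
    (∀ s, HasDerivAt Y1 (Z1 s) s) ∧ (∀ s, HasDerivAt Z1 (-s * Y1 s) s) ∧
    (∀ s, HasDerivAt Y2 (Z2 s) s) ∧ (∀ s, HasDerivAt Z2 (-s * Y2 s) s) ∧
    ∀ s, Y1 s * Z2 s - Y2 s * Z1 s = 1 := by
  have b1 := airyC1_bound
  have b2 := airyC2_bound
  set f := airyPS airyC1
  set f' := airyPS (fun m => ((m : ℝ) + 1) * airyC1 (m + 1))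
  set f'' := airyPS (fun m => ((m : ℝ) + 1) * (((m + 1 : ℕ) : ℝ) + 1) * airyC1 (m + 1 + 1))
  set g := airyPS airyC2
  set g' := airyPS (fun m => ((m : ℝ) + 1) * airyC2 (m + 1))
  set g'' := airyPS (fun m => ((m : ℝ) + 1) * (((m + 1 : ℕ) : ℝ) + 1) * airyC2 (m + 1 + 1))
  have hf : ∀ w, HasDerivAt f (f' w) w := fun w => airyPS_hasDerivAt b1 w
  have hf' : ∀ w, HasDerivAt f' (f'' w) w := fun w => by
    have := airyPS_hasDerivAt (airyPS_deriv_bound b1) w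
    simpa only [f', f'', mul_assoc] using this
  have hg : ∀ w, HasDerivAt g (g' w) w := fun w => airyPS_hasDerivAt b2 w
  have hg' : ∀ w, HasDerivAt g' (g'' w) w := fun w => by
    have := airyPS_hasDerivAt (airyPS_deriv_bound b2) w
    simpa only [g', g'', mul_assoc] using this
  have of : ∀ w, 9 * w * f'' w + 6 * f' w = - f w := fun w => by
    refine airyPS_ode b1 6 (fun m => ?_) w
    rw [airyC1]
    have : (0:ℝ) < 3 * m + 2 := by positivity
    field_simp
    ring
  have og : ∀ w, 9 * w * g'' w + 12 * g' w = - g w := fun w => by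
    refine airyPS_ode b2 12 (fun m => ?_) w
    rw [airyC2]
    have : (0:ℝ) < 3 * m + 4 := by positivity
    field_simp
    ring
  have p3 : ∀ s : ℝ, HasDerivAt (fun s : ℝ => s ^ 3) (3 * s ^ 2) s := fun s => by
    simpa using hasDerivAt_pow 3 s
  have p2 : ∀ s : ℝ, HasDerivAt (fun s : ℝ => s ^ 2) (2 * s) s := fun s => by
    simpa using hasDerivAt_pow 2 s
  have cf := fun s => (hf (s^3)).comp s (p3 s)
  have cf' := fun s => (hf' (s^3)).comp s (p3 s)
  have cg := fun s => (hg (s^3)).comp s (p3 s)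
  have cg' := fun s => (hg' (s^3)).comp s (p3 s)
  have H1 : ∀ s, HasDerivAt (fun s => f (s^3)) (3 * s^2 * f' (s^3)) s := fun s => by
    refine (cf s).congr_deriv ?_; ring
  have H2 : ∀ s, HasDerivAt (fun s => 3 * s^2 * f' (s^3)) (-s * f (s^3)) s := fun s => by
    refine (((p2 s).const_mul 3).mul (cf' s)).congr_deriv ?_
    simp only [Function.comp]
    linear_combination s * of (s^3)
  have H3 : ∀ s, HasDerivAt (fun s => s * g (s^3)) (g (s^3) + 3 * s^3 * g' (s^3)) s := fun s => by
    refine ((hasDerivAt_id s).mul (cg s)).congr_deriv ?_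
    simp only [Function.comp, id]; ring
  have H4 : ∀ s, HasDerivAt (fun s => g (s^3) + 3 * s^3 * g' (s^3)) (-s * (s * g (s^3))) s := fun s => by
    refine ((cg s).add (((p3 s).const_mul 3).mul (cg' s))).congr_deriv ?_
    simp only [Function.comp]
    linear_combination s^2 * og (s^3)
  refine ⟨_, _, _, _, H1, H2, H3, H4, ?_⟩
  intro s
  have hd : ∀ s, HasDerivAt (fun s => f (s^3) * (g (s^3) + 3 * s^3 * g' (s^3))
      - (s * g (s^3)) * (3 * s^2 * f' (s^3))) 0 s := fun s => by
    refine (((H1 s).mul (H4 s)).sub ((H3 s).mul (H2 s))).congr_deriv ?_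
    ring
  have := is_const_of_deriv_eq_zero (fun s => (hd s).differentiableAt) (fun s => (hd s).deriv) s 0
  rw [this]
  have f0 : f 0 = 1 := by
    show airyPS airyC1 0 = 1
    rw [airyPS, tsum_eq_single 0]
    · simp [airyC1]
    · intro m hm; simp [hm]
  have g0 : g 0 = 1 := by
    show airyPS airyC2 0 = 1
    rw [airyPS, tsum_eq_single 0]
    · simp [airyC2]
    · intro m hm; simp [hm]
  simp [f0, g0]

/-- Liouville-Green type bound for solutions of the scalar second order equation. -/
lemma airy_bound (Y Z : ℝ → ℝ) (hY : ∀ s, HasDerivAt Y (Z s) s)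
    (hZ : ∀ s, HasDerivAt Z (-s * Y s) s) :
    ∃ C : ℝ, 0 ≤ C ∧ ∀ s, 1 ≤ s → Y s ^ 2 ≤ C ∧ Z s ^ 2 ≤ C * Real.sqrt s := by
  set e : ℝ → ℝ := fun s => Real.sqrt s * Y s ^ 2 + Z s ^ 2 / Real.sqrt s
    + 1 / 2 * (Y s * Z s) / Real.sqrt s ^ 3 with he
  set e' : ℝ → ℝ := fun s => - (3 / 4) * (Y s * Z s) / Real.sqrt s ^ 5 with he'
  have hlow : ∀ s, 1 ≤ s → 3 / 4 * (Real.sqrt s * Y s ^ 2 + Z s ^ 2 / Real.sqrt s) ≤ e s := by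
    intro s hs
    have hr : 1 ≤ Real.sqrt s := Real.one_le_sqrt.mpr hs
    set r := Real.sqrt s
    have hr0 : 0 < r := by linarith
    have : e s - 3 / 4 * (r * Y s ^ 2 + Z s ^ 2 / r)
        = (r^4 * Y s ^ 2 + r^2 * Z s ^ 2 + 2 * (Y s * Z s)) / (4 * r ^ 3) := by
      simp only [he]
      change r * _ + _ / r + 1 / 2 * _ / r ^ 3 - _ = _
      field_simp
      ring
    have h2 : 0 ≤ (r^4 * Y s ^ 2 + r^2 * Z s ^ 2 + 2 * (Y s * Z s)) / (4 * r ^ 3) := by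
      apply div_nonneg _ (by positivity)
      have h4 : 1 ≤ r ^ 4 := one_le_pow₀ hr
      have h3 : 1 ≤ r ^ 2 := one_le_pow₀ hr
      nlinarith [sq_nonneg (Y s + Z s), sq_nonneg (Y s), sq_nonneg (Z s)]
    linarith
  have hder : ∀ s, 1 ≤ s → HasDerivAt e (e' s) s := by
    intro s hs
    have hs0 : 0 < s := by linarith
    have hr0 : 0 < Real.sqrt s := Real.sqrt_pos.mpr hs0
    have hsq := Real.hasDerivAt_sqrt hs0.ne'
    have h := ((hsq.mul ((hY s).pow 2)).add (((hZ s).pow 2).div hsq hr0.ne')).add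
      ((((hY s).mul (hZ s)).const_mul (1/2)).div (hsq.pow 3) (pow_pos hr0 3).ne')
    refine h.congr_deriv ?_
    simp only [he', Pi.mul_apply, Pi.pow_apply]
    have hss : s = Real.sqrt s ^ 2 := (Real.sq_sqrt hs0.le).symm
    set r := Real.sqrt s with hrdef
    rw [hss]
    field_simp
    ring
  set k : ℝ → ℝ := fun s => e s * Real.exp (1 / s) with hk
  have hkd : ∀ s, 1 ≤ s → HasDerivAt k (e' s * Real.exp (1/s) + e s * (Real.exp (1/s) * (-1/s^2))) s := by
    intro s hs
    have hs0 : s ≠ 0 := by linarith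
    have h1 : HasDerivAt (fun s : ℝ => 1 / s) (-1/s^2) s := by
      have := hasDerivAt_inv hs0
      simp only [one_div]
      refine this.congr_deriv ?_
      field_simp
    exact (hder s hs).mul h1.exp
  have hanti : AntitoneOn k (Set.Ici 1) := by
    apply antitoneOn_of_deriv_nonpos (convex_Ici 1)
    · intro s hs; exact (hkd s hs).continuousAt.continuousWithinAt
    · intro s hs
      rw [interior_Ici] at hs
      exact (hkd s (le_of_lt hs)).differentiableAt.differentiableWithinAt
    · intro s hs
      rw [interior_Ici] at hs
      have hs1 : 1 ≤ s := le_of_lt hs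
      rw [(hkd s hs1).deriv]
      have hl := hlow s hs1
      have hs0 : 0 < s := by linarith
      have hss : s = Real.sqrt s ^ 2 := (Real.sq_sqrt hs0.le).symm
      have hr : 1 ≤ Real.sqrt s := Real.one_le_sqrt.mpr hs1
      have hkey : e' s ≤ e s / s ^ 2 := by
        simp only [he']
        have hs2 : s^2 = Real.sqrt s ^ 4 := by conv_lhs => rw [hss]
                                               ring
        rw [hs2]
        set r := Real.sqrt s
        have hr0 : 0 < r := by linarith
        rw [div_le_div_iff₀ (by positivity) (by positivity)]
        have h5 : e s * r ^ 5 ≥ 3/4 * (r * Y s ^ 2 + Z s ^ 2 / r) * r ^ 5 := by gcongr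
        have h6 : 3/4 * (r * Y s ^ 2 + Z s ^ 2 / r) * r ^ 5 = 3/4 * (r^2 * Y s ^ 2 + Z s ^ 2) * r ^ 4 := by
          field_simp
        have h7 : 1 ≤ r^2 := one_le_pow₀ hr
        have h8 : -(3/4) * (Y s * Z s) ≤ 3/4 * (r^2 * Y s ^ 2 + Z s ^ 2) := by
          nlinarith [sq_nonneg (Y s + Z s), sq_nonneg (Y s), sq_nonneg (Z s)]
        have h9 : 0 ≤ r ^ 4 := by positivity
        nlinarith [mul_le_mul_of_nonneg_right h8 h9]
      have hexp := Real.exp_pos (1/s)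
      have : e' s * Real.exp (1/s) + e s * (Real.exp (1/s) * (-1/s^2))
        = (e' s - e s / s^2) * Real.exp (1/s) := by ring
      rw [this]
      exact mul_nonpos_of_nonpos_of_nonneg (by linarith) hexp.le
  have hkub : ∀ s, 1 ≤ s → e s ≤ k 1 := by
    intro s hs
    have h1 := hanti (Set.mem_Ici.mpr le_rfl) (Set.mem_Ici.mpr hs) hs
    have hl := hlow s hs
    have hpos : 0 ≤ e s := le_trans (by positivity) hl
    have : e s ≤ k s := by
      simp only [hk]
      have : 1 ≤ Real.exp (1/s) := Real.one_le_exp (by positivity)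
      nlinarith
    linarith
  have hk1 : 0 ≤ k 1 := by
    have hl := hlow 1 le_rfl
    have hpos : 0 ≤ e 1 := le_trans (by positivity) hl
    exact mul_nonneg hpos (Real.exp_pos _).le
  refine ⟨4/3 * k 1, by positivity, fun s hs => ?_⟩
  have hl := hlow s hs
  have hu := hkub s hs
  have hr : 1 ≤ Real.sqrt s := Real.one_le_sqrt.mpr hs
  set r := Real.sqrt s
  have hr0 : 0 < r := by linarith
  have hz : 0 ≤ Z s ^ 2 / r := by positivity
  have hy : 0 ≤ r * Y s ^ 2 := by positivity
  constructor
  · nlinarith [sq_nonneg (Y s)]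
  · have : Z s ^ 2 / r ≤ 4/3 * k 1 := by linarith
    rwa [div_le_iff₀ hr0] at this


open FourierTransform in
lemma fourier_L2_ae_eq (f : ℝ → ℂ) (h1 : Integrable f) (h2 : MemLp f 2) :
    ((𝓕 (h2.toLp f) : Lp ℂ 2 (volume : Measure ℝ)) : ℝ → ℂ) =ᵐ[volume] 𝓕 f := by
  set F : Lp ℂ 2 (volume : Measure ℝ) := 𝓕 (h2.toLp f) with hF
  have hFl : LocallyIntegrable (F : ℝ → ℂ) :=
    (Lp.memLp F).locallyIntegrable (by norm_num)
  have hcont : Continuous (𝓕 f) := by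
    exact VectorFourier.fourierIntegral_continuous Real.continuous_fourierChar
      (by exact continuous_inner) h1
  have hfl : LocallyIntegrable (𝓕 f) := hcont.locallyIntegrable
  have key : ∀ᵐ x ∂volume, (F : ℝ → ℂ) x - 𝓕 f x = 0 := by
    apply ae_eq_zero_of_integral_contDiff_smul_eq_zero (hFl.sub hfl)
    intro g hg hgs
    have hg' : ContDiff ℝ (⊤ : ℕ∞) (fun x => (g x : ℂ)) := Complex.ofRealCLM.contDiff.comp hg
    have hgs' : HasCompactSupport (fun x => (g x : ℂ)) :=
      hgs.comp_left (g := fun t : ℝ => (t : ℂ)) (by simp)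
    set G : SchwartzMap ℝ ℂ := hgs'.toSchwartzMap hg' with hG
    have hGa : ∀ x, G x = (g x : ℂ) := fun x => rfl
    have e1 : ∫ x, g x • ((F : ℝ → ℂ) x) = ∫ x, (𝓕 G) x • f x := by
      have := congrArg (fun T => T G) (Lp.fourier_toTemperedDistribution_eq (h2.toLp f))
      simp only [TemperedDistribution.fourier_apply, Lp.toTemperedDistribution_apply] at this
      have t2 : ∫ x, g x • ((F : ℝ → ℂ) x) = ∫ x, G x • ((F : ℝ → ℂ) x) := by
        apply integral_congr_ae; filter_upwards with x; simp [hGa]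
      rw [t2, ← this]
      apply integral_congr_ae
      filter_upwards [h2.coeFn_toLp] with x hx
      rw [hx]
    have e2 : ∫ x, (𝓕 G) x • f x = ∫ x, G x • 𝓕 f x := by
      have := VectorFourier.integral_fourierIntegral_smul_eq_flip (L := innerₗ ℝ)
        (μ := (volume : Measure ℝ)) (ν := (volume : Measure ℝ)) (f := fun x => G x) (g := f)
        Real.continuous_fourierChar continuous_inner G.integrable h1
      simpa [SchwartzMap.fourier_coe] using! this
    have e3 : ∫ x, g x • (𝓕 f x) = ∫ x, G x • 𝓕 f x := by
        apply integral_congr_ae; filter_upwards with x; simp [hGa]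
    simp only [Pi.sub_apply, smul_sub]
    rw [integral_sub, e1, e2, e3, sub_self]
    · exact hFl.integrable_smul_left_of_hasCompactSupport hg.continuous hgs
    · exact hfl.integrable_smul_left_of_hasCompactSupport hg.continuous hgs
  filter_upwards [key] with x hx
  exact sub_eq_zero.mp hx

lemma L2_norm_sq (h : Lp ℂ 2 (volume : Measure ℝ)) : ∫ x, ‖h x‖ ^ 2 = ‖h‖ ^ 2 := by
  have := L2.inner_def (𝕜 := ℂ) h h
  have h3 : ‖h‖ ^ 2 = RCLike.re (inner ℂ h h) := (inner_self_eq_norm_sq (𝕜 := ℂ) h).symm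
  rw [h3, this, ← integral_re (L2.integrable_inner h h)]
  congr 1; ext x
  exact (inner_self_eq_norm_sq (𝕜 := ℂ) (h x)).symm

open FourierTransform in
lemma fourier_bessel (f : ℝ → ℂ) (h1 : Integrable f) (h2 : MemLp f 2) :
    Integrable (fun k => ‖𝓕 f k‖ ^ 2) ∧ ∫ k, ‖𝓕 f k‖ ^ 2 = ∫ x, ‖f x‖ ^ 2 := by
  have hae := fourier_L2_ae_eq f h1 h2
  constructor
  · have hm : MemLp (𝓕 f) 2 := (memLp_congr_ae hae).mp (Lp.memLp _)
    exact hm.integrable_norm_pow (by norm_num)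
  · have : ∫ k, ‖𝓕 f k‖ ^ 2 = ∫ k, ‖(𝓕 (h2.toLp f) : Lp ℂ 2 (volume : Measure ℝ)) k‖ ^ 2 := by
      apply integral_congr_ae; filter_upwards [hae] with x hx; rw [hx]
    rw [this, L2_norm_sq, Lp.norm_fourier_eq, ← L2_norm_sq]
    apply integral_congr_ae; filter_upwards [h2.coeFn_toLp] with x hx; rw [hx]

open FourierTransform in
lemma fourier_limit_zero (f : ℝ → ℂ) (hf : MemLp f 2) (fn : ℕ → ℝ → ℂ)
    (h1 : ∀ n, Integrable (fn n)) (h2 : ∀ n, MemLp (fn n) 2)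
    (hlim : Tendsto (fun n => ∫ x, ‖fn n x - f x‖ ^ 2) atTop (𝓝 0))
    (hK : ∀ K : ℝ, Tendsto (fun n => ∫ k in Set.Icc (-K) K, ‖𝓕 (fn n) k‖ ^ 2) atTop (𝓝 0)) :
    f =ᵐ[volume] 0 := by
  set F : Lp ℂ 2 (volume : Measure ℝ) := 𝓕 (hf.toLp f) with hF
  have hFi : Integrable (fun k => ‖F k‖ ^ 2) := (Lp.memLp F).integrable_norm_pow (by norm_num)
  have hz : ∀ K : ℝ, ∫ k in Set.Icc (-K) K, ‖F k‖ ^ 2 = 0 := by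
    intro K
    have hle : ∀ n, ∫ k in Set.Icc (-K) K, ‖F k‖ ^ 2 ≤
        (2 * ∫ x, ‖fn n x - f x‖ ^ 2) + 2 * ∫ k in Set.Icc (-K) K, ‖𝓕 (fn n) k‖ ^ 2 := by
      intro n
      set D : Lp ℂ 2 (volume : Measure ℝ) := 𝓕 ((h2 n).toLp (fn n)) - F with hD
      have hDi : Integrable (fun k => ‖D k‖ ^ 2) := (Lp.memLp D).integrable_norm_pow (by norm_num)
      have hDn : ∫ k, ‖D k‖ ^ 2 = ∫ x, ‖fn n x - f x‖ ^ 2 := by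
        have e : D = 𝓕 (((h2 n).sub hf).toLp (fn n - f)) := by
          rw [hD, hF, MemLp.toLp_sub]
          exact ((Lp.fourierTransformₗᵢ ℝ ℂ).map_sub _ _).symm
        rw [L2_norm_sq, e, Lp.norm_fourier_eq, ← L2_norm_sq]
        apply integral_congr_ae
        filter_upwards [((h2 n).sub hf).coeFn_toLp] with x hx
        rw [hx]; rfl
      have hb := (fourier_bessel (fn n) (h1 n) (h2 n)).1
      calc ∫ k in Set.Icc (-K) K, ‖F k‖ ^ 2
          ≤ ∫ k in Set.Icc (-K) K, (2 * ‖D k‖ ^ 2 + 2 * ‖𝓕 (fn n) k‖ ^ 2) := by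
            apply integral_mono_ae hFi.integrableOn
              ((hDi.const_mul 2).add (hb.const_mul 2)).integrableOn
            apply ae_restrict_of_ae
            filter_upwards [fourier_L2_ae_eq (fn n) (h1 n) (h2 n),
              Lp.coeFn_sub (𝓕 ((h2 n).toLp (fn n))) F] with k hk hk2
            rw [Pi.sub_apply, hk] at hk2
            have : F k = 𝓕 (fn n) k - D k := by rw [hD, hk2]; ring
            rw [this]
            simp only [Pi.add_apply]
            have := norm_sub_le (𝓕 (fn n) k) (D k)
            nlinarith [sq_nonneg (‖𝓕 (fn n) k‖ - ‖D k‖), norm_nonneg (𝓕 (fn n) k - D k)]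
        _ = (2 * ∫ k in Set.Icc (-K) K, ‖D k‖ ^ 2) + 2 * ∫ k in Set.Icc (-K) K, ‖𝓕 (fn n) k‖ ^ 2 := by
            rw [integral_add (hDi.const_mul 2).integrableOn (hb.const_mul 2).integrableOn,
              integral_const_mul, integral_const_mul]
        _ ≤ _ := by
            gcongr
            rw [← hDn]
            exact setIntegral_le_integral hDi (Filter.Eventually.of_forall fun x => by positivity)
    have hl := (hlim.const_mul 2).add ((hK K).const_mul 2)
    simp only [mul_zero, add_zero] at hl
    apply le_antisymm (ge_of_tendsto' hl hle)
    exact integral_nonneg fun x => by positivity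
  have hFz : F = 0 := by
    have h0 : ∀ᵐ k ∂volume, ∀ n : ℕ, k ∈ Set.Icc (-(n:ℝ)) n → F k = 0 := by
      rw [ae_all_iff]
      intro n
      have := (setIntegral_eq_zero_iff_of_nonneg_ae
        (Filter.Eventually.of_forall fun x => by positivity) hFi.integrableOn).mp (hz n)
      rw [Filter.EventuallyEq, ae_restrict_iff' measurableSet_Icc] at this
      filter_upwards [this] with k hk hk2
      simpa using hk hk2
    apply Lp.ext
    filter_upwards [h0, Lp.coeFn_zero ℂ 2 (volume : Measure ℝ)] with k hk hk0
    rw [hk0]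
    obtain ⟨n, hn⟩ := exists_nat_ge |k|
    exact hk n (abs_le.mp hn)
  have : hf.toLp f = 0 := by
    have h := Lp.norm_fourier_eq (hf.toLp f)
    rw [← hF, hFz, norm_zero] at h
    exact norm_eq_zero.mp h.symm
  have h3 := hf.coeFn_toLp
  rw [this] at h3
  exact h3.symm.trans (Lp.coeFn_zero ℂ 2 (volume : Measure ℝ))


/-- Differentiation of a parametric interval integral with jointly continuous derivative. -/
lemma param_deriv (M R : ℝ) (F F' : ℝ → ℝ → ℂ)
    (hF : ContinuousOn (Function.uncurry F) (Set.Ioi M ×ˢ Set.univ))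
    (hF' : ContinuousOn (Function.uncurry F') (Set.Ioi M ×ˢ Set.univ))
    (hd : ∀ x, M < x → ∀ t, HasDerivAt (fun x => F x t) (F' x t) x) (x : ℝ) (hx : M < x) :
    HasDerivAt (fun x => ∫ t in (-R)..R, F x t) (∫ t in (-R)..R, F' x t) x := by
  have hcs : ∀ G : ℝ → ℝ → ℂ, ContinuousOn (Function.uncurry G) (Set.Ioi M ×ˢ Set.univ) →
      ∀ y, M < y → Continuous (G y) := by
    intro G hG y hy
    have : Continuous ((Function.uncurry G) ∘ fun t => (y, t)) := by
      apply hG.comp_continuous (by fun_prop)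
      intro t; exact ⟨hy, trivial⟩
    exact this
  set δ := (x - M) / 2 with hδ
  have hδ0 : 0 < δ := by rw [hδ]; linarith
  have hcomp : IsCompact (Set.Icc (x - δ) (x + δ) ×ˢ Set.uIcc (-R) R) :=
    isCompact_Icc.prod isCompact_uIcc
  obtain ⟨C, hC⟩ := hcomp.exists_bound_of_continuousOn (hF'.mono (by
    rintro ⟨p, q⟩ ⟨hp, -⟩
    refine ⟨?_, trivial⟩
    simp only [Set.mem_Icc, Set.mem_Ioi] at hp ⊢
    have := hp.1
    linarith))
  refine (intervalIntegral.hasDerivAt_integral_of_dominated_loc_of_deriv_le (bound := fun _ => C)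
    (s := Set.Icc (x - δ) (x + δ)) (Icc_mem_nhds (by linarith) (by linarith)) ?_ ?_ ?_ ?_ ?_ ?_).2
  · filter_upwards [lt_mem_nhds hx] with y hy
    exact (hcs F hF y hy).aestronglyMeasurable
  · exact (hcs F hF x hx).intervalIntegrable _ _
  · exact (hcs F' hF' x hx).aestronglyMeasurable
  · filter_upwards with t ht y hy
    exact hC (y, t) ⟨hy, Set.uIoc_subset_uIcc ht⟩
  · exact intervalIntegrable_const
  · filter_upwards with t ht y hy
    apply hd
    have := hy.1
    linarith

/-- Wronskian argument for a single frequency. -/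
lemma ode_ineq (M a X δ : ℝ) (hMa : M < a) (haX : a ≤ X) (v v' ε : ℝ → ℂ) (y y' q : ℝ → ℝ)
    (hv : ∀ x, M < x → HasDerivAt v (v' x) x)
    (hv' : ∀ x, M < x → HasDerivAt v' (-((q x : ℝ) : ℂ) * v x - ε x) x)
    (hy : ∀ x, HasDerivAt y (y' x) x) (hy' : ∀ x, HasDerivAt y' (-q x * y x) x)
    (hya : y a = 0) (hya' : y' a = 1)
    (hδ : ∀ x ∈ Set.Icc a (X + 1), ‖ε x‖ * |y x| ≤ δ) :
    ‖v a‖ ≤ (X + 1 - a) * δ + 2 * (∫ x in X..(X+1), ‖v x‖ * |y' x|)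
      + ‖v X‖ * |y X| + ‖v (X+1)‖ * |y (X+1)| := by
  set W : ℝ → ℂ := fun x => v' x * (y x : ℂ) - v x * (y' x : ℂ) with hW
  have hδ0 : 0 ≤ δ := le_trans (by positivity) (hδ a ⟨le_rfl, by linarith⟩)
  have hWd : ∀ x, M < x → HasDerivAt W (- ε x * (y x : ℂ)) x := by
    intro x hx
    refine (((hv' x hx).mul (hy x).ofReal_comp).sub ((hv x hx).mul (hy' x).ofReal_comp)).congr_deriv ?_
    push_cast; ring
  have hWb : ∀ x ∈ Set.Icc a (X+1), ‖W x - W a‖ ≤ (X + 1 - a) * δ := by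
    intro x hx
    have := Convex.norm_image_sub_le_of_norm_hasDerivWithin_le (𝕜 := ℝ) (f := W)
      (f' := fun x => - ε x * (y x : ℂ)) (s := Set.Icc a (X+1)) (x := a) (y := x) (C := δ)
      (fun z hz => (hWd z (by linarith [hz.1])).hasDerivWithinAt)
      (fun z hz => by simpa using hδ z hz) (convex_Icc _ _) ⟨le_rfl, by linarith⟩ hx
    refine this.trans ?_
    rw [Real.norm_eq_abs, abs_of_nonneg (by linarith [hx.1]), mul_comm]
    have := hx.2
    gcongr
  have hWa : W a = - v a := by simp [hW, hya, hya']
  have hcv : ContinuousOn v (Set.Icc X (X+1)) := fun x hx =>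
    (hv x (by linarith [hx.1])).continuousAt.continuousWithinAt
  have hcW : ContinuousOn W (Set.Icc X (X+1)) := fun x hx =>
    (hWd x (by linarith [hx.1])).continuousAt.continuousWithinAt
  have hcy' : Continuous y' := continuous_iff_continuousAt.mpr fun x => (hy' x).continuousAt
  have hle : X ≤ X + 1 := by linarith
  have hi1 : IntervalIntegrable (fun x => W x - W a) volume X (X+1) :=
    (hcW.sub continuousOn_const).intervalIntegrable_of_Icc hle
  have hi2 : IntervalIntegrable (fun x => 2 * (v x * (y' x : ℂ))) volume X (X+1) := by
    apply ContinuousOn.intervalIntegrable_of_Icc hle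
    exact continuousOn_const.mul (hcv.mul (Complex.continuous_ofReal.comp hcy').continuousOn)
  have hftc : ∫ x in X..(X+1), ((W x - W a) + 2 * (v x * (y' x : ℂ))) =
      (v (X+1) * (y (X+1) : ℂ) - (X+1 : ℝ) * W a) - (v X * (y X : ℂ) - (X : ℝ) * W a) := by
    apply intervalIntegral.integral_eq_sub_of_hasDerivAt (f := fun x => v x * (y x : ℂ) - (x : ℝ) * W a)
    · intro x hx
      rw [Set.uIcc_of_le hle] at hx
      refine (((hv x (by linarith [hx.1])).mul (hy x).ofReal_comp).sub
        ((hasDerivAt_id x).ofReal_comp.mul_const (W a))).congr_deriv ?_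
      simp only [hW]; push_cast; ring
    · exact hi1.add hi2
  rw [intervalIntegral.integral_add hi1 hi2] at hftc
  have hva : v a = (∫ x in X..(X+1), (W x - W a)) + (∫ x in X..(X+1), 2 * (v x * (y' x : ℂ)))
      + v X * (y X : ℂ) - v (X+1) * (y (X+1) : ℂ) := by
    rw [hftc, hWa]; push_cast; ring
  have n1 : ‖∫ x in X..(X+1), (W x - W a)‖ ≤ (X + 1 - a) * δ := by
    have := intervalIntegral.norm_integral_le_of_norm_le_const (a := X) (b := X+1)
      (f := fun x => W x - W a) (C := (X + 1 - a) * δ) (fun x hx => by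
        rw [Set.uIoc_of_le hle] at hx
        exact hWb x ⟨by linarith [hx.1], hx.2⟩)
    simpa using this
  have n2 : ‖∫ x in X..(X+1), 2 * (v x * (y' x : ℂ))‖ ≤ 2 * (∫ x in X..(X+1), ‖v x‖ * |y' x|) := by
    refine (intervalIntegral.norm_integral_le_integral_norm hle).trans (le_of_eq ?_)
    rw [← intervalIntegral.integral_const_mul]
    congr 1; ext x; simp
  calc ‖v a‖ = _ := by rw [hva]
    _ ≤ ‖∫ x in X..(X+1), (W x - W a)‖ + ‖∫ x in X..(X+1), 2 * (v x * (y' x : ℂ))‖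
      + ‖v X * (y X : ℂ)‖ + ‖v (X+1) * (y (X+1) : ℂ)‖ := by
        refine (norm_sub_le _ _).trans ?_
        gcongr
        exact norm_add₃_le
    _ ≤ _ := by
        rw [norm_mul, norm_mul, Complex.norm_real, Complex.norm_real, Real.norm_eq_abs, Real.norm_eq_abs]
        gcongr

lemma sq_integral_le (X : ℝ) (h : ℝ → ℝ) (hh : ContinuousOn h (Set.Icc X (X+1))) :
    (∫ x in X..(X+1), h x) ^ 2 ≤ ∫ x in X..(X+1), h x ^ 2 := by
  have hle : X ≤ X + 1 := by linarith
  set m := ∫ x in X..(X+1), h x with hm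
  have i1 : IntervalIntegrable h volume X (X+1) := hh.intervalIntegrable_of_Icc hle
  have i2 : IntervalIntegrable (fun x => h x ^ 2) volume X (X+1) :=
    (hh.pow 2).intervalIntegrable_of_Icc hle
  have : 0 ≤ ∫ x in X..(X+1), (h x - m) ^ 2 :=
    intervalIntegral.integral_nonneg hle fun x _ => sq_nonneg _
  have e : ∫ x in X..(X+1), (h x - m) ^ 2 = (∫ x in X..(X+1), h x ^ 2) - 2 * m * m + m ^ 2 := by
    have : (fun x => (h x - m) ^ 2) = fun x => (h x ^ 2 - 2 * m * h x) + m ^ 2 := by ext x; ring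
    rw [this, intervalIntegral.integral_add (i2.sub (i1.const_mul _)) intervalIntegrable_const,
      intervalIntegral.integral_sub i2 (i1.const_mul _), intervalIntegral.integral_const_mul, ← hm]
    simp
  nlinarith

/-- cutoff function -/
noncomputable def cutC (R t : ℝ) : ℝ := (1 - t ^ 2 / R ^ 2) ^ 2

noncomputable def cutE (k t : ℝ) : ℂ := Complex.exp (((-2 * Real.pi * k * t : ℝ) : ℂ) * Complex.I)

noncomputable def cutD (R k t : ℝ) : ℂ :=
  (((-4 / R ^ 2 + 12 * t ^ 2 / R ^ 4 : ℝ) : ℂ)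
    + 2 * ((-2 * Real.pi * k : ℝ) : ℂ) * Complex.I * ((-4 * t / R ^ 2 * (1 - t ^ 2 / R ^ 2) : ℝ) : ℂ)) * cutE k t

lemma cutE_norm (k t : ℝ) : ‖cutE k t‖ = 1 := Complex.norm_exp_ofReal_mul_I _

lemma cutE_deriv (k t : ℝ) : HasDerivAt (cutE k) (((-2 * Real.pi * k : ℝ) : ℂ) * Complex.I * cutE k t) t := by
  have h1 : HasDerivAt (fun t : ℝ => ((-2 * Real.pi * k * t : ℝ) : ℂ) * Complex.I)
      (((-2 * Real.pi * k : ℝ) : ℂ) * Complex.I) t := by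
    have : HasDerivAt (fun t : ℝ => -2 * Real.pi * k * t) (-2 * Real.pi * k) t := by
      simpa using (hasDerivAt_id t).const_mul (-2 * Real.pi * k)
    exact this.ofReal_comp.mul_const _
  refine h1.cexp.congr_deriv ?_
  rw [cutE]; ring

lemma cutC_deriv (R t : ℝ) : HasDerivAt (cutC R) (-4 * t / R ^ 2 * (1 - t ^ 2 / R ^ 2)) t := by
  have h : HasDerivAt (fun t : ℝ => 1 - t ^ 2 / R ^ 2) (- (2 * t / R ^ 2)) t := by
    have := ((hasDerivAt_pow 2 t).div_const (R ^ 2)).const_sub 1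
    simpa using this
  refine (h.pow 2).congr_deriv ?_
  push_cast; ring

lemma cutC_deriv2 (R t : ℝ) : HasDerivAt (fun t : ℝ => -4 * t / R ^ 2 * (1 - t ^ 2 / R ^ 2))
    (-4 / R ^ 2 + 12 * t ^ 2 / R ^ 4) t := by
  have h : HasDerivAt (fun t : ℝ => 1 - t ^ 2 / R ^ 2) (- (2 * t / R ^ 2)) t := by
    have := ((hasDerivAt_pow 2 t).div_const (R ^ 2)).const_sub 1
    simpa using this
  have h2 : HasDerivAt (fun t : ℝ => -4 * t / R ^ 2) (-4 / R ^ 2) t := by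
    have := ((hasDerivAt_id t).const_mul (-4)).div_const (R ^ 2)
    simpa using this
  refine (h2.mul h).congr_deriv ?_
  ring

lemma cutC_bound (R t : ℝ) (hR : 0 < R) (ht : t ∈ Set.Icc (-R) R) : 0 ≤ cutC R t ∧ cutC R t ≤ 1 := by
  have h1 : t ^ 2 / R ^ 2 ≤ 1 := by
    rw [div_le_one (by positivity)]; exact sq_le_sq' ht.1 ht.2
  have h0 : 0 ≤ t ^ 2 / R ^ 2 := by positivity
  refine ⟨sq_nonneg _, ?_⟩
  rw [cutC]; nlinarith

lemma cutD_bound (R K k t : ℝ) (hR : 1 ≤ R) (hk : |k| ≤ K) (ht : t ∈ Set.Icc (-R) R) :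
    ‖cutD R k t‖ ≤ (16 + 16 * Real.pi * K) / R := by
  have hR0 : 0 < R := by linarith
  have h1 : t ^ 2 / R ^ 2 ≤ 1 := by
    rw [div_le_one (by positivity)]; exact sq_le_sq' ht.1 ht.2
  have h0 : 0 ≤ t ^ 2 / R ^ 2 := by positivity
  rw [cutD, norm_mul, cutE_norm, mul_one]
  refine (norm_add_le _ _).trans ?_
  rw [norm_mul, norm_mul, norm_mul, Complex.norm_real, Complex.norm_real, Complex.norm_real]
  simp only [Complex.norm_I, Complex.norm_ofNat, mul_one, Real.norm_eq_abs]
  have b1 : |-4 / R ^ 2 + 12 * t ^ 2 / R ^ 4| ≤ 16 / R := by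
    have e : -4 / R ^ 2 + 12 * t ^ 2 / R ^ 4 = (-4 + 12 * (t ^ 2 / R ^ 2)) / R ^ 2 := by
      field_simp
    rw [e, abs_div, abs_of_pos (by positivity : 0 < R ^ 2), div_le_div_iff₀ (by positivity) hR0]
    have : |-4 + 12 * (t ^ 2 / R ^ 2)| ≤ 16 := by rw [abs_le]; constructor <;> linarith
    calc _ ≤ 16 * R := by gcongr
      _ ≤ 16 * R ^ 2 := by nlinarith
  have b2 : |-4 * t / R ^ 2 * (1 - t ^ 2 / R ^ 2)| ≤ 4 / R := by
    rw [abs_mul, abs_div, abs_mul, abs_of_pos (by positivity : 0 < R ^ 2)]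
    have h2 : |1 - t ^ 2 / R ^ 2| ≤ 1 := by rw [abs_le]; constructor <;> linarith
    have h3 : |t| ≤ R := abs_le.mpr ht
    calc |(-4:ℝ)| * |t| / R ^ 2 * |1 - t ^ 2 / R ^ 2| ≤ 4 * R / R ^ 2 * 1 := by
          gcongr; simp
      _ = 4 / R := by field_simp
  have b3 : |-2 * Real.pi * k| ≤ 2 * Real.pi * K := by
    rw [abs_mul, abs_mul, abs_of_pos Real.pi_pos]; simp; gcongr
  have hK : 0 ≤ K := (abs_nonneg k).trans hk
  calc _ ≤ 16 / R + 2 * (2 * Real.pi * K) * (4 / R) := by gcongr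
    _ = _ := by ring

/-- Integration by parts against the cutoff plane wave. -/
lemma cut_ibp (R k : ℝ) (hR : 0 < R) (f f1 f2 : ℝ → ℂ) (h1 : ∀ t, HasDerivAt f (f1 t) t)
    (h2 : ∀ t, HasDerivAt f1 (f2 t) t) (hc2 : Continuous f2) :
    ∫ t in (-R)..R, f2 t * ((cutC R t : ℂ) * cutE k t)
      = (∫ t in (-R)..R, f t * cutD R k t)
        - (((2 * Real.pi * k) ^ 2 : ℝ) : ℂ) * ∫ t in (-R)..R, f t * ((cutC R t : ℂ) * cutE k t) := by
  have hcf : Continuous f := continuous_iff_continuousAt.mpr fun t => (h1 t).continuousAt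
  have hcf1 : Continuous f1 := continuous_iff_continuousAt.mpr fun t => (h2 t).continuousAt
  have hcE : Continuous (cutE k) := continuous_iff_continuousAt.mpr fun t => (cutE_deriv k t).continuousAt
  have hcC : Continuous (cutC R) := continuous_iff_continuousAt.mpr fun t => (cutC_deriv R t).continuousAt
  have hcD : Continuous (cutD R k) := by unfold cutD; fun_prop
  set c : ℝ → ℂ := fun t => (cutC R t : ℂ) * cutE k t with hc
  set c1 : ℝ → ℂ := fun t => ((-4 * t / R ^ 2 * (1 - t ^ 2 / R ^ 2) : ℝ) : ℂ) * cutE k t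
    + (cutC R t : ℂ) * (((-2 * Real.pi * k : ℝ) : ℂ) * Complex.I * cutE k t) with hc1
  have dc : ∀ t, HasDerivAt c (c1 t) t := fun t =>
    (cutC_deriv R t).ofReal_comp.mul (cutE_deriv k t)
  have dc1 : ∀ t, HasDerivAt c1 (cutD R k t - (((2 * Real.pi * k) ^ 2 : ℝ) : ℂ) * c t) t := by
    intro t
    refine (((cutC_deriv2 R t).ofReal_comp.mul (cutE_deriv k t)).add
      ((cutC_deriv R t).ofReal_comp.mul ((cutE_deriv k t).const_mul
        (((-2 * Real.pi * k : ℝ) : ℂ) * Complex.I)))).congr_deriv ?_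
    simp only [cutD, hc]
    push_cast
    linear_combination ((cutC R t : ℂ) * (4 * Real.pi^2 * k^2) * cutE k t) * Complex.I_sq
  have hcc1 : Continuous c1 := continuous_iff_continuousAt.mpr fun t => (dc1 t).continuousAt
  have hcc : Continuous c := continuous_iff_continuousAt.mpr fun t => (dc t).continuousAt
  have z1 : ∀ t, t ^ 2 = R ^ 2 → c t = 0 := by
    intro t ht
    have : cutC R t = 0 := by simp [cutC, ht, hR.ne']
    simp only [hc, this]; simp
  have z2 : ∀ t, t ^ 2 = R ^ 2 → c1 t = 0 := by
    intro t ht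
    have : cutC R t = 0 := by simp [cutC, ht, hR.ne']
    have h3 : (1 - t ^ 2 / R ^ 2) = 0 := by simp [ht, hR.ne']
    simp only [hc1, this, h3]; simp
  have I1 := intervalIntegral.integral_deriv_mul_eq_sub (u := f1) (v := c) (u' := f2) (v' := c1)
    (a := -R) (b := R) (fun t _ => h2 t) (fun t _ => dc t) (hc2.intervalIntegrable _ _)
    (hcc1.intervalIntegrable _ _)
  have I2 := intervalIntegral.integral_deriv_mul_eq_sub (u := f) (v := c1) (u' := f1)
    (v' := fun t => cutD R k t - (((2 * Real.pi * k) ^ 2 : ℝ) : ℂ) * c t)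
    (a := -R) (b := R) (fun t _ => h1 t) (fun t _ => dc1 t) (hcf1.intervalIntegrable _ _)
    ((hcD.sub (continuous_const.mul hcc)).intervalIntegrable _ _)
  have j1 : IntervalIntegrable (fun t => f2 t * c t) volume (-R) R :=
    (hc2.mul hcc).intervalIntegrable _ _
  have j2 : IntervalIntegrable (fun t => f1 t * c1 t) volume (-R) R :=
    (hcf1.mul hcc1).intervalIntegrable _ _
  have j3 : IntervalIntegrable (fun t => f t * (cutD R k t - (((2 * Real.pi * k) ^ 2 : ℝ) : ℂ) * c t))
      volume (-R) R := (hcf.mul (hcD.sub (continuous_const.mul hcc))).intervalIntegrable _ _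
  have j4 : IntervalIntegrable (fun t => f t * cutD R k t) volume (-R) R :=
    (hcf.mul hcD).intervalIntegrable _ _
  have j5 : IntervalIntegrable (fun t => (((2 * Real.pi * k) ^ 2 : ℝ) : ℂ) * (f t * c t)) volume (-R) R :=
    (continuous_const.mul (hcf.mul hcc)).intervalIntegrable _ _
  rw [z1 R rfl, z1 (-R) (by ring), intervalIntegral.integral_add j1 j2] at I1
  rw [z2 R rfl, z2 (-R) (by ring), intervalIntegral.integral_add j2 j3] at I2
  have e : ∫ t in (-R)..R, f t * (cutD R k t - (((2 * Real.pi * k) ^ 2 : ℝ) : ℂ) * c t)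
    = (∫ t in (-R)..R, f t * cutD R k t) - (((2 * Real.pi * k) ^ 2 : ℝ) : ℂ) * ∫ t in (-R)..R, f t * c t := by
    rw [← intervalIntegral.integral_const_mul, ← intervalIntegral.integral_sub j4 j5]
    congr 1; ext t; ring
  rw [← e]
  linear_combination I1 - I2


noncomputable def cutF (g : ℝ → ℂ) (R : ℝ) : ℝ → ℂ :=
  (Set.Icc (-R) R).indicator (fun t => g t * (cutC R t : ℂ))

lemma cutE_continuous : Continuous (Function.uncurry cutE) := by
  unfold cutE Function.uncurry; fun_prop

lemma cutC_continuous (R : ℝ) : Continuous (cutC R) :=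
  continuous_iff_continuousAt.mpr fun t => (cutC_deriv R t).continuousAt

lemma cutF_integrable (g : ℝ → ℂ) (hg : Continuous g) (R : ℝ) : Integrable (cutF g R) := by
  rw [cutF, integrable_indicator_iff measurableSet_Icc]
  have := cutC_continuous R
  exact Continuous.integrableOn_Icc (by fun_prop)

lemma cutF_norm_le (g : ℝ → ℂ) (R t : ℝ) (hR : 0 < R) : ‖cutF g R t‖ ≤ ‖g t‖ := by
  rw [cutF]
  by_cases ht : t ∈ Set.Icc (-R) R
  · rw [Set.indicator_of_mem ht, norm_mul, Complex.norm_real, Real.norm_eq_abs]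
    obtain ⟨h0, h1⟩ := cutC_bound R t hR ht
    rw [abs_of_nonneg h0]
    exact mul_le_of_le_one_right (norm_nonneg _) h1
  · rw [Set.indicator_of_notMem ht]; simp

lemma cutF_memLp (g : ℝ → ℂ) (hg : Continuous g) (hi : Integrable (fun t => ‖g t‖ ^ 2)) (R : ℝ)
    (hR : 0 < R) : MemLp (cutF g R) 2 := by
  have h2 : MemLp g 2 := (memLp_two_iff_integrable_sq_norm hg.aestronglyMeasurable).mpr hi
  exact h2.mono (cutF_integrable g hg R).aestronglyMeasurable
    (Eventually.of_forall fun t => cutF_norm_le g R t hR)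

open FourierTransform in
lemma cutF_fourier (g : ℝ → ℂ) (R k : ℝ) (hR : 0 < R) :
    𝓕 (cutF g R) k = ∫ t in (-R)..R, g t * ((cutC R t : ℂ) * cutE k t) := by
  rw [Real.fourier_real_eq_integral_exp_smul, intervalIntegral.integral_of_le (by linarith),
    ← integral_Icc_eq_integral_Ioc, ← integral_indicator measurableSet_Icc]
  congr 1; ext t
  rw [cutF]
  by_cases ht : t ∈ Set.Icc (-R) R
  · rw [Set.indicator_of_mem ht, Set.indicator_of_mem ht, smul_eq_mul, cutE]
    have : -2 * Real.pi * t * k = -2 * Real.pi * k * t := by ring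
    rw [this]; ring
  · rw [Set.indicator_of_notMem ht, Set.indicator_of_notMem ht, smul_zero]

/-- Bessel inequality for the cut-off transform. -/
lemma cut_bessel (g : ℝ → ℂ) (hg : Continuous g) (hi : Integrable (fun t => ‖g t‖ ^ 2)) (R K : ℝ)
    (hR : 0 < R) :
    ∫ k in Set.Icc (-K) K, ‖∫ t in (-R)..R, g t * ((cutC R t : ℂ) * cutE k t)‖ ^ 2
      ≤ ∫ t, ‖g t‖ ^ 2 := by
  obtain ⟨h1, h2⟩ := fourier_bessel (cutF g R) (cutF_integrable g hg R) (cutF_memLp g hg hi R hR)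
  simp only [cutF_fourier g R _ hR] at h1 h2
  calc _ ≤ _ := setIntegral_le_integral h1 (Eventually.of_forall fun x => by positivity)
    _ = ∫ t, ‖cutF g R t‖ ^ 2 := h2
    _ ≤ _ := by
      apply integral_mono_of_nonneg (Eventually.of_forall fun x => by positivity) hi
      apply Eventually.of_forall fun x => ?_
      have := cutF_norm_le g R x hR
      simp only
      gcongr

lemma cutF_tendsto (g : ℝ → ℂ) (hg : Continuous g) (hi : Integrable (fun t => ‖g t‖ ^ 2)) :
    Tendsto (fun n : ℕ => ∫ t, ‖cutF g (((n : ℝ) + 1) ^ 2) t - g t‖ ^ 2) atTop (𝓝 0) := by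
  have h0 : (0 : ℝ) = ∫ t : ℝ, (0 : ℝ) := by simp
  rw [h0]
  have hRt : Tendsto (fun n : ℕ => ((n : ℝ) + 1) ^ 2) atTop atTop := by
    apply tendsto_atTop_mono (fun n => ?_) tendsto_natCast_atTop_atTop
    have : (0:ℝ) ≤ n := by positivity
    nlinarith
  apply tendsto_integral_of_dominated_convergence (fun t => 4 * ‖g t‖ ^ 2)
  · intro n
    exact (((cutF_integrable g hg _).aestronglyMeasurable.sub hg.aestronglyMeasurable).norm.pow 2)
  · exact hi.const_mul 4
  · intro n
    apply Eventually.of_forall fun t => ?_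
    have h1 := cutF_norm_le g (((n : ℝ) + 1) ^ 2) t (by positivity)
    have h2 := norm_sub_le (cutF g (((n : ℝ) + 1) ^ 2) t) (g t)
    rw [Real.norm_eq_abs, abs_of_nonneg (by positivity)]
    have h3 : ‖cutF g (((n : ℝ) + 1) ^ 2) t - g t‖ ≤ 2 * ‖g t‖ := by linarith
    calc _ ≤ (2 * ‖g t‖) ^ 2 := by gcongr
      _ = _ := by ring
  · apply Eventually.of_forall fun t => ?_
    have hev : ∀ᶠ n : ℕ in atTop, cutF g (((n : ℝ) + 1) ^ 2) t
        = g t * ((1 - t ^ 2 / (((n : ℝ) + 1) ^ 2) ^ 2) ^ 2 : ℝ) := by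
      filter_upwards [hRt.eventually_ge_atTop |t|] with n hn
      rw [cutF, Set.indicator_of_mem (Set.mem_Icc.mpr (abs_le.mp hn)), cutC]
    have hl : Tendsto (fun n : ℕ => g t * ((1 - t ^ 2 / (((n : ℝ) + 1) ^ 2) ^ 2) ^ 2 : ℝ)) atTop
        (𝓝 (g t * (((1 - 0) ^ 2 : ℝ) : ℂ))) := by
      apply Tendsto.const_mul
      apply (Complex.continuous_ofReal.tendsto _).comp
      apply Tendsto.pow
      apply Tendsto.const_sub
      apply Tendsto.const_div_atTop
      exact (tendsto_pow_atTop (by norm_num)).comp hRt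
    have hl2 : Tendsto (fun n : ℕ => cutF g (((n : ℝ) + 1) ^ 2) t) atTop (𝓝 (g t)) := by
      have := hl.congr' (hev.mono fun n hn => hn.symm)
      simpa using this
    have := ((hl2.sub_const (g t)).norm.pow 2)
    simpa using this


lemma airy_family (E a K : ℝ) : ∃ y y' : ℝ → ℝ → ℝ,
    Continuous (Function.uncurry y) ∧ Continuous (Function.uncurry y') ∧
    (∀ k x, HasDerivAt (y k) (y' k x) x) ∧
    (∀ k x, HasDerivAt (y' k) (-(x + E - (2 * Real.pi * k) ^ 2) * y k x) x) ∧
    (∀ k, y k a = 0) ∧ (∀ k, y' k a = 1) ∧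
    ∃ C X0 : ℝ, 0 ≤ C ∧ ∀ x, X0 ≤ x → 1 ≤ E + x ∧ ∀ k ∈ Set.Icc (-K) K,
      y k x ^ 2 ≤ C ∧ y' k x ^ 2 ≤ C * Real.sqrt (E + x) := by
  obtain ⟨Y1, Z1, Y2, Z2, h1, h1', h2, h2', hW⟩ := airy_exists
  obtain ⟨C1, hC1, hb1⟩ := airy_bound Y1 Z1 h1 h1'
  obtain ⟨C2, hC2, hb2⟩ := airy_bound Y2 Z2 h2 h2'
  have cY1 : Continuous Y1 := continuous_iff_continuousAt.mpr fun t => (h1 t).continuousAt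
  have cY2 : Continuous Y2 := continuous_iff_continuousAt.mpr fun t => (h2 t).continuousAt
  have cZ1 : Continuous Z1 := continuous_iff_continuousAt.mpr fun t => (h1' t).continuousAt
  have cZ2 : Continuous Z2 := continuous_iff_continuousAt.mpr fun t => (h2' t).continuousAt
  set s : ℝ → ℝ → ℝ := fun k x => x + E - (2 * Real.pi * k) ^ 2 with hs
  have hsd : ∀ k x, HasDerivAt (s k) 1 x := fun k x => by
    simpa [hs] using ((hasDerivAt_id x).add_const E).sub_const ((2 * Real.pi * k) ^ 2)
  have comp : ∀ (Y Y' : ℝ → ℝ), (∀ t, HasDerivAt Y (Y' t) t) → ∀ k x,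
      HasDerivAt (fun x => Y (s k x)) (Y' (s k x)) x := fun Y Y' hY k x => by
    simpa using! (hY (s k x)).comp x (hsd k x)
  refine ⟨fun k x => Y1 (s k a) * Y2 (s k x) - Y2 (s k a) * Y1 (s k x),
    fun k x => Y1 (s k a) * Z2 (s k x) - Y2 (s k a) * Z1 (s k x), ?_, ?_, ?_, ?_, ?_, ?_, ?_⟩
  · simp only [hs, Function.uncurry]; fun_prop
  · simp only [hs, Function.uncurry]; fun_prop
  · intro k x
    exact ((comp _ _ h2 k x).const_mul _).sub ((comp _ _ h1 k x).const_mul _)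
  · intro k x
    refine (((comp _ _ h2' k x).const_mul (Y1 (s k a))).sub
      ((comp _ _ h1' k x).const_mul (Y2 (s k a)))).congr_deriv ?_
    simp only [hs]; ring
  · intro k; ring
  · intro k; exact hW _
  · obtain ⟨A1, hA1⟩ := (isCompact_Icc (a := -K) (b := K)).exists_bound_of_continuousOn
      (f := fun k => Y1 (s k a)) (by simp only [hs]; fun_prop)
    obtain ⟨A2, hA2⟩ := (isCompact_Icc (a := -K) (b := K)).exists_bound_of_continuousOn
      (f := fun k => Y2 (s k a)) (by simp only [hs]; fun_prop)
    refine ⟨2 * (A1 ^ 2 * C2 + A2 ^ 2 * C1), 1 - E + (2 * Real.pi * K) ^ 2, by positivity, ?_⟩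
    intro x hx
    have hx1 : 1 ≤ E + x := by nlinarith [sq_nonneg (2 * Real.pi * K)]
    refine ⟨hx1, fun k hk => ?_⟩
    have hk2 : (2 * Real.pi * k) ^ 2 ≤ (2 * Real.pi * K) ^ 2 := by
      rw [mul_pow, mul_pow _ K]
      have := sq_le_sq' hk.1 hk.2
      gcongr
    have hs1 : 1 ≤ s k x := by simp only [hs]; linarith
    have hsle : s k x ≤ E + x := by simp only [hs]; nlinarith [sq_nonneg (2 * Real.pi * k)]
    have hsq : Real.sqrt (s k x) ≤ Real.sqrt (E + x) := Real.sqrt_le_sqrt hsle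
    obtain ⟨p1, q1⟩ := hb1 _ hs1
    obtain ⟨p2, q2⟩ := hb2 _ hs1
    have hA1' : Y1 (s k a) ^ 2 ≤ A1 ^ 2 := by
      rw [← sq_abs]; have := hA1 k hk; rw [Real.norm_eq_abs] at this; gcongr
    have hA2' : Y2 (s k a) ^ 2 ≤ A2 ^ 2 := by
      rw [← sq_abs]; have := hA2 k hk; rw [Real.norm_eq_abs] at this; gcongr
    have gen : ∀ p q r t : ℝ, (p * q - r * t) ^ 2 ≤ 2 * (p ^ 2 * q ^ 2 + r ^ 2 * t ^ 2) := by
      intro p q r t; nlinarith [sq_nonneg (p * q + r * t)]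
    constructor
    · refine (gen _ _ _ _).trans ?_
      gcongr
    · refine (gen _ _ _ _).trans ?_
      calc 2 * (Y1 (s k a) ^ 2 * Z2 (s k x) ^ 2 + Y2 (s k a) ^ 2 * Z1 (s k x) ^ 2)
          ≤ 2 * (A1 ^ 2 * (C2 * Real.sqrt (E + x)) + A2 ^ 2 * (C1 * Real.sqrt (E + x))) := by
            have q1' := q1.trans (mul_le_mul_of_nonneg_left hsq hC1)
            have q2' := q2.trans (mul_le_mul_of_nonneg_left hsq hC2)
            gcongr
        _ = _ := by ring



lemma freq_estimate_cont (E X K P C τ : ℝ) (hK : 0 ≤ K) (hC : 0 ≤ C)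
    (v : ℝ → ℝ → ℂ) (va : ℝ → ℂ) (hva : Continuous va)
    (hv : Continuous (Function.uncurry v)) (y y' : ℝ → ℝ → ℝ)
    (hy : Continuous (Function.uncurry y)) (hy' : Continuous (Function.uncurry y'))
    (hineq : ∀ k ∈ Set.Icc (-K) K, ‖va k‖ ≤ P + 2 * (∫ x in X..(X+1), ‖v k x‖ * |y' k x|)
      + ‖v k X‖ * |y k X| + ‖v k (X+1)‖ * |y k (X+1)|)
    (hyb : ∀ x ∈ Set.Icc X (X+1), ∀ k ∈ Set.Icc (-K) K,
      y k x ^ 2 ≤ C ∧ y' k x ^ 2 ≤ C * Real.sqrt (E + x))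
    (hF : ∀ x ∈ Set.Icc X (X+1), ∫ k in Set.Icc (-K) K, ‖v k x‖ ^ 2 ≤ τ ∧
      Real.sqrt (E + x) * (∫ k in Set.Icc (-K) K, ‖v k x‖ ^ 2) ≤ τ) :
    ∫ k in Set.Icc (-K) K, ‖va k‖ ^ 2 ≤ 4 * (2 * K * P ^ 2 + 6 * C * τ) := by
  have hvx : ∀ x, Continuous (fun k => v k x) := fun x =>
    hv.comp (continuous_id.prodMk continuous_const)
  have hvk : ∀ k, Continuous (fun x => v k x) := fun k =>
    hv.comp (continuous_const.prodMk continuous_id)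
  have hyx : ∀ x, Continuous (fun k => y k x) := fun x =>
    hy.comp (continuous_id.prodMk continuous_const)
  have hyx' : ∀ x, Continuous (fun k => y' k x) := fun x =>
    hy'.comp (continuous_id.prodMk continuous_const)
  have hyk' : ∀ k, Continuous (fun x => y' k x) := fun k =>
    hy'.comp (continuous_const.prodMk continuous_id)
  have ci : ∀ f : ℝ → ℝ, Continuous f → IntegrableOn f (Set.Icc (-K) K) volume := fun f hf =>
    hf.continuousOn.integrableOn_compact isCompact_Icc
  set G : ℝ → ℝ → ℝ := fun k x => (‖v k x‖ * |y' k x|) ^ 2 with hG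
  have hGc : Continuous (Function.uncurry G) := by
    have : Continuous (fun p : ℝ × ℝ => (‖Function.uncurry v p‖ * |Function.uncurry y' p|) ^ 2) :=
      (hv.norm.mul hy'.abs).pow 2
    exact this
  set H : ℝ → ℝ := fun k => ∫ x in X..(X+1), G k x with hH
  have hHc : Continuous H :=
    intervalIntegral.continuous_parametric_intervalIntegral_of_continuous' hGc X (X+1)
  have hpt : ∀ k ∈ Set.Icc (-K) K, ‖va k‖ ^ 2 ≤
      4 * (P ^ 2 + 4 * H k + ‖v k X‖ ^ 2 * C + ‖v k (X+1)‖ ^ 2 * C) := by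
    intro k hk
    have h1 := hineq k hk
    have h2 := sq_integral_le X (fun x => ‖v k x‖ * |y' k x|)
      (((hvk k).norm.mul (hyk' k).abs).continuousOn)
    have h3 := (hyb X ⟨le_rfl, by linarith⟩ k hk).1
    have h4 := (hyb (X+1) ⟨by linarith, le_rfl⟩ k hk).1
    set q := ∫ x in X..(X+1), ‖v k x‖ * |y' k x|
    have h2' : q ^ 2 ≤ H k := h2
    have h5 : (‖v k X‖ * |y k X|) ^ 2 ≤ ‖v k X‖ ^ 2 * C := by
      rw [mul_pow, sq_abs]; exact mul_le_mul_of_nonneg_left h3 (sq_nonneg _)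
    have h6 : (‖v k (X+1)‖ * |y k (X+1)|) ^ 2 ≤ ‖v k (X+1)‖ ^ 2 * C := by
      rw [mul_pow, sq_abs]; exact mul_le_mul_of_nonneg_left h4 (sq_nonneg _)
    set r := ‖v k X‖ * |y k X|
    set s := ‖v k (X+1)‖ * |y k (X+1)|
    have h7 : ‖va k‖ ^ 2 ≤ (P + 2 * q + r + s) ^ 2 :=
      pow_le_pow_left₀ (norm_nonneg _) h1 2
    nlinarith [sq_nonneg (P - 2 * q), sq_nonneg (P - r), sq_nonneg (P - s),
      sq_nonneg (2 * q - r), sq_nonneg (2 * q - s), sq_nonneg (r - s)]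
  have hswap : ∫ k in Set.Icc (-K) K, H k ≤ C * τ := by
    have e1 : ∫ k in Set.Icc (-K) K, H k = ∫ k in Set.Icc (-K) K, ∫ x in Set.Icc X (X+1), G k x := by
      congr 1; ext k
      simp only [hH]
      rw [intervalIntegral.integral_of_le (by linarith), integral_Icc_eq_integral_Ioc]
    rw [e1, integral_integral_swap]
    · have : ∀ x ∈ Set.Icc X (X+1), ∫ k in Set.Icc (-K) K, G k x ≤ C * τ := by
        intro x hx
        calc ∫ k in Set.Icc (-K) K, G k x
            ≤ ∫ k in Set.Icc (-K) K, C * (Real.sqrt (E + x)) * ‖v k x‖ ^ 2 := by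
              apply setIntegral_mono_on (ci _ (((hvx x).norm.mul (hyx' x).abs).pow 2))
                (ci _ (continuous_const.mul ((hvx x).norm.pow 2))) measurableSet_Icc
              intro k hk
              change (‖v k x‖ * |y' k x|) ^ 2 ≤ _
              rw [mul_pow, sq_abs, mul_comm]
              exact mul_le_mul_of_nonneg_right (hyb x hx k hk).2 (sq_nonneg _)
          _ = C * (Real.sqrt (E + x) * ∫ k in Set.Icc (-K) K, ‖v k x‖ ^ 2) := by
              rw [integral_const_mul, mul_assoc]
          _ ≤ C * τ := mul_le_mul_of_nonneg_left (hF x hx).2 hC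
      have hc : Continuous (fun x => ∫ k in (-K)..K, G k x) :=
        intervalIntegral.continuous_parametric_intervalIntegral_of_continuous'
          (f := fun x k => G k x) (hGc.comp continuous_swap) (-K) K
      have hc' : Continuous (fun x => ∫ k in Set.Icc (-K) K, G k x) := by
        convert hc using 2 with x
        rw [intervalIntegral.integral_of_le (by linarith), integral_Icc_eq_integral_Ioc]
      calc ∫ x in Set.Icc X (X+1), ∫ k in Set.Icc (-K) K, G k x
          ≤ ∫ x in Set.Icc X (X+1), C * τ := by
            apply setIntegral_mono_on (hc'.continuousOn.integrableOn_compact isCompact_Icc)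
              (continuous_const.continuousOn.integrableOn_compact isCompact_Icc) measurableSet_Icc this
        _ = C * τ := by simp
    · rw [Measure.prod_restrict]
      exact hGc.continuousOn.integrableOn_compact (isCompact_Icc.prod isCompact_Icc)
  have c1 := (hvx X).norm.pow 2
  have c2 := (hvx (X+1)).norm.pow 2
  have hFX := (hF X ⟨le_rfl, by linarith⟩).1
  have hFX1 := (hF (X+1) ⟨by linarith, le_rfl⟩).1
  calc ∫ k in Set.Icc (-K) K, ‖va k‖ ^ 2 ≤
      ∫ k in Set.Icc (-K) K, 4 * (P ^ 2 + 4 * H k + ‖v k X‖ ^ 2 * C + ‖v k (X+1)‖ ^ 2 * C) := by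
        apply setIntegral_mono_on (ci _ (hva.norm.pow 2)) (ci _ (by fun_prop)) measurableSet_Icc hpt
    _ = 4 * (2 * K * P ^ 2 + 4 * (∫ k in Set.Icc (-K) K, H k) +
        (∫ k in Set.Icc (-K) K, ‖v k X‖ ^ 2) * C + (∫ k in Set.Icc (-K) K, ‖v k (X+1)‖ ^ 2) * C) := by
        rw [integral_const_mul, integral_add (ci _ (by fun_prop)) (ci _ (by fun_prop)),
          integral_add (ci _ (by fun_prop)) (ci _ (by fun_prop)),
          integral_add (ci _ (by fun_prop)) (ci _ (by fun_prop)), integral_const_mul,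
          integral_mul_const, integral_mul_const]
        simp only [integral_const, smul_eq_mul]
        have : (volume.restrict (Set.Icc (-K) K)).real Set.univ = 2 * K := by
          simp [Measure.real]
          rw [ENNReal.toReal_ofReal (by linarith)]; ring
        rw [this]
    _ ≤ _ := by nlinarith [mul_le_mul_of_nonneg_right hFX hC, mul_le_mul_of_nonneg_right hFX1 hC]

lemma freq_estimate (E a X K P C τ : ℝ) (haX : a ≤ X) (hK : 0 ≤ K) (hC : 0 ≤ C)
    (v : ℝ → ℝ → ℂ)
    (hv : ContinuousOn (Function.uncurry v) (Set.univ ×ˢ Set.Ici a)) (y y' : ℝ → ℝ → ℝ)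
    (hy : Continuous (Function.uncurry y)) (hy' : Continuous (Function.uncurry y'))
    (hineq : ∀ k ∈ Set.Icc (-K) K, ‖v k a‖ ≤ P + 2 * (∫ x in X..(X+1), ‖v k x‖ * |y' k x|)
      + ‖v k X‖ * |y k X| + ‖v k (X+1)‖ * |y k (X+1)|)
    (hyb : ∀ x ∈ Set.Icc X (X+1), ∀ k ∈ Set.Icc (-K) K,
      y k x ^ 2 ≤ C ∧ y' k x ^ 2 ≤ C * Real.sqrt (E + x))
    (hF : ∀ x ∈ Set.Icc X (X+1), ∫ k in Set.Icc (-K) K, ‖v k x‖ ^ 2 ≤ τ ∧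
      Real.sqrt (E + x) * (∫ k in Set.Icc (-K) K, ‖v k x‖ ^ 2) ≤ τ) :
    ∫ k in Set.Icc (-K) K, ‖v k a‖ ^ 2 ≤ 4 * (2 * K * P ^ 2 + 6 * C * τ) := by
  have hvc : Continuous (Function.uncurry (fun k x => v k (max x a))) := by
    have : Continuous (fun p : ℝ × ℝ => (p.1, max p.2 a)) := by fun_prop
    exact hv.comp_continuous this (fun p => ⟨trivial, Set.mem_Ici.2 (le_max_right _ _)⟩)
  have hm : ∀ x, X ≤ x → max x a = x := fun x hx => max_eq_left (haX.trans hx)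
  refine freq_estimate_cont E X K P C τ hK hC (fun k x => v k (max x a)) (fun k => v k a) ?_ hvc
    y y' hy hy' ?_ hyb ?_
  · have := hvc.comp (continuous_id.prodMk (continuous_const (y := a)))
    simpa [Function.comp_def, Function.uncurry] using this
  · intro k hk
    have := hineq k hk
    have e : ∫ x in X..(X+1), ‖v k (max x a)‖ * |y' k x| = ∫ x in X..(X+1), ‖v k x‖ * |y' k x| := by
      apply intervalIntegral.integral_congr
      intro x hx
      rw [Set.uIcc_of_le (by linarith)] at hx
      simp only [hm x hx.1]
    rw [e]
    simp only [hm X le_rfl, hm (X+1) (by linarith)]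
    exact this
  · intro x hx
    simp only [hm x hx.1]
    exact hF x hx


lemma eps_bound (g : ℝ → ℂ) (hg : Continuous g) (hi : Integrable (fun t => ‖g t‖ ^ 2))
    (h1 : ∫ t, ‖g t‖ ^ 2 ≤ 1) (N K k : ℝ) (hN : 1 ≤ N) (hk : |k| ≤ K) :
    ‖∫ t in (-(N^2))..(N^2), g t * cutD (N^2) k t‖ ≤
      (1 + 2 * (16 + 16 * Real.pi * K) ^ 2) / (2 * N) := by
  have hN0 : 0 < N := by linarith
  set C := 16 + 16 * Real.pi * K with hC
  have hR : (1 : ℝ) ≤ N ^ 2 := by nlinarith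
  have hle : -(N^2) ≤ N^2 := by nlinarith
  have hgc : Continuous (fun t => ‖g t‖ ^ 2) := by fun_prop
  refine (intervalIntegral.norm_integral_le_of_norm_le (a := -(N^2)) (b := N^2)
    (g := fun t => (1 / (2 * N)) * ‖g t‖ ^ 2 + C ^ 2 / (2 * N ^ 3)) hle ?_ ?_).trans ?_
  · refine Eventually.of_forall fun t ht => ?_
    have hd := cutD_bound (N^2) K k t hR hk ⟨ht.1.le, ht.2⟩
    rw [norm_mul]
    have : ‖g t‖ * ‖cutD (N^2) k t‖ ≤ ‖g t‖ * (C / N ^ 2) :=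
      mul_le_mul_of_nonneg_left hd (norm_nonneg _)
    refine this.trans ?_
    have e : (1 / (2 * N)) * ‖g t‖ ^ 2 + C ^ 2 / (2 * N ^ 3) - ‖g t‖ * (C / N ^ 2)
        = (1 / (2 * N)) * (‖g t‖ - C / N) ^ 2 := by
      field_simp; ring
    have : 0 ≤ (1 / (2 * N)) * (‖g t‖ - C / N) ^ 2 := by positivity
    linarith
  · exact Continuous.intervalIntegrable (by fun_prop) _ _
  · rw [intervalIntegral.integral_add (Continuous.intervalIntegrable (by fun_prop) _ _)
      (Continuous.intervalIntegrable (by fun_prop) _ _), intervalIntegral.integral_const_mul]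
    have : ∫ t in (-(N^2))..(N^2), ‖g t‖ ^ 2 ≤ 1 := by
      rw [intervalIntegral.integral_of_le hle]
      exact (setIntegral_le_integral hi (Eventually.of_forall fun t => by positivity)).trans h1
    have h2 : 1 / (2 * N) * ∫ t in (-(N^2))..(N^2), ‖g t‖ ^ 2 ≤ 1 / (2 * N) * 1 :=
      mul_le_mul_of_nonneg_left this (by positivity)
    simp only [intervalIntegral.integral_const, smul_eq_mul]
    have e : 1 / (2 * N) * 1 + (N ^ 2 - -N ^ 2) * (C ^ 2 / (2 * N ^ 3)) = (1 + 2 * C ^ 2) / (2 * N) := by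
      field_simp; ring
    linarith

lemma halfplane_zero (E M a : ℝ) (hMa : M < a) (U U1 U11 U2 U22 : ℝ → ℝ → ℂ)
    (hU : ContinuousOn (Function.uncurry U) (Set.Ioi M ×ˢ Set.univ))
    (hU11 : ContinuousOn (Function.uncurry U11) (Set.Ioi M ×ˢ Set.univ))
    (hU2 : ContinuousOn (Function.uncurry U2) (Set.Ioi M ×ˢ Set.univ))
    (hU22 : ContinuousOn (Function.uncurry U22) (Set.Ioi M ×ˢ Set.univ))
    (d1 : ∀ x, M < x → ∀ t, HasDerivAt (U x) (U1 x t) t)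
    (d11 : ∀ x, M < x → ∀ t, HasDerivAt (U1 x) (U11 x t) t)
    (d2 : ∀ x, M < x → ∀ t, HasDerivAt (fun x => U x t) (U2 x t) x)
    (d22 : ∀ x, M < x → ∀ t, HasDerivAt (fun x => U2 x t) (U22 x t) x)
    (pde : ∀ x, M < x → ∀ t, U11 x t + U22 x t + ((E + x : ℝ) : ℂ) * U x t = 0)
    (hi : ∀ x, a ≤ x → Integrable (fun t => ‖U x t‖ ^ 2))
    (hi1 : ∀ x, a ≤ x → ∫ t, ‖U x t‖ ^ 2 ≤ 1)
    (hlim : Tendsto (fun x => Real.sqrt (E + x) * ∫ t, ‖U x t‖ ^ 2) atTop (𝓝 0)) :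
    ∀ t, U a t = 0 := by
  have slice : ∀ G : ℝ → ℝ → ℂ, ContinuousOn (Function.uncurry G) (Set.Ioi M ×ˢ Set.univ) →
      ∀ y, M < y → Continuous (G y) := by
    intro G hG y hy
    exact hG.comp_continuous (f := fun t => (y, t)) (by fun_prop) (fun t => ⟨hy, trivial⟩)
  set v : ℝ → ℝ → ℝ → ℂ := fun R k x => ∫ t in (-R)..R, U x t * ((cutC R t : ℂ) * cutE k t) with hv
  set w : ℝ → ℝ → ℝ → ℂ := fun R k x => ∫ t in (-R)..R, U2 x t * ((cutC R t : ℂ) * cutE k t) with hw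
  set ep : ℝ → ℝ → ℝ → ℂ := fun R k x => ∫ t in (-R)..R, U x t * cutD R k t with hep
  have cE : ∀ k, Continuous (cutE k) := fun k =>
    continuous_iff_continuousAt.mpr fun t => (cutE_deriv k t).continuousAt
  have wt : ∀ R k, Continuous (fun t => (cutC R t : ℂ) * cutE k t) := fun R k => by
    have := cE k; have := cutC_continuous R; fun_prop
  have cmul : ∀ R k, ∀ G : ℝ → ℝ → ℂ, ContinuousOn (Function.uncurry G) (Set.Ioi M ×ˢ Set.univ) →
      ContinuousOn (Function.uncurry (fun x t => G x t * ((cutC R t : ℂ) * cutE k t)))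
        (Set.Ioi M ×ˢ Set.univ) := by
    intro R k G hG
    exact hG.mul (((wt R k).comp continuous_snd).continuousOn)
  have hvd : ∀ R k x, M < x → HasDerivAt (v R k) (w R k x) x := by
    intro R k x hx
    exact param_deriv M R (fun x t => U x t * ((cutC R t : ℂ) * cutE k t))
      (fun x t => U2 x t * ((cutC R t : ℂ) * cutE k t)) (cmul R k U hU) (cmul R k U2 hU2)
      (fun x hx t => (d2 x hx t).mul_const _) x hx
  have hwd : ∀ R k x, 0 < R → M < x →
      HasDerivAt (w R k) (-((x + E - (2 * Real.pi * k) ^ 2 : ℝ) : ℂ) * v R k x - ep R k x) x := by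
    intro R k x hR hx
    refine (param_deriv M R (fun x t => U2 x t * ((cutC R t : ℂ) * cutE k t))
      (fun x t => U22 x t * ((cutC R t : ℂ) * cutE k t)) (cmul R k U2 hU2) (cmul R k U22 hU22)
      (fun x hx t => (d22 x hx t).mul_const _) x hx).congr_deriv ?_
    have ibp := cut_ibp R k hR (U x) (U1 x) (U11 x) (d1 x hx) (d11 x hx) (slice U11 hU11 x hx)
    have e : ∀ t, U22 x t * ((cutC R t : ℂ) * cutE k t)
        = -(U11 x t * ((cutC R t : ℂ) * cutE k t))
          - ((E + x : ℝ) : ℂ) * (U x t * ((cutC R t : ℂ) * cutE k t)) := by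
      intro t
      have : U22 x t = - U11 x t - ((E + x : ℝ) : ℂ) * U x t := by linear_combination pde x hx t
      rw [this]; ring
    simp only [e]
    have i1 : IntervalIntegrable (fun t => -(U11 x t * ((cutC R t : ℂ) * cutE k t))) volume (-R) R :=
      (((slice U11 hU11 x hx).mul (wt R k)).neg).intervalIntegrable _ _
    have i2 : IntervalIntegrable (fun t => ((E + x : ℝ) : ℂ) * (U x t * ((cutC R t : ℂ) * cutE k t)))
        volume (-R) R :=
      (continuous_const.mul ((slice U hU x hx).mul (wt R k))).intervalIntegrable _ _
    rw [intervalIntegral.integral_sub i1 i2, intervalIntegral.integral_neg,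
      intervalIntegral.integral_const_mul, ibp]
    simp only [hv, hep]
    push_cast; ring
  have hvc : ∀ R, ContinuousOn (Function.uncurry (v R)) (Set.univ ×ˢ Set.Ici a) := by
    intro R
    have hUm : Continuous (fun p : (ℝ × ℝ) × ℝ => U (max p.1.2 a) p.2) :=
      hU.comp_continuous (f := fun p : (ℝ × ℝ) × ℝ => (max p.1.2 a, p.2)) (by fun_prop)
        (fun p => ⟨lt_of_lt_of_le hMa (le_max_right _ _), trivial⟩)
    have hEm : Continuous (fun p : (ℝ × ℝ) × ℝ => cutE p.1.1 p.2) :=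
      cutE_continuous.comp (f := fun p : (ℝ × ℝ) × ℝ => (p.1.1, p.2)) (by fun_prop)
    have hCm : Continuous (fun p : (ℝ × ℝ) × ℝ => cutC R p.2) :=
      (cutC_continuous R).comp continuous_snd
    have := intervalIntegral.continuous_parametric_intervalIntegral_of_continuous' (μ := volume)
      (f := fun (p : ℝ × ℝ) t => U (max p.2 a) t * ((cutC R t : ℂ) * cutE p.1 t))
      (by
        change Continuous (fun p : (ℝ × ℝ) × ℝ => U (max p.1.2 a) p.2 * ((cutC R p.2 : ℂ) * cutE p.1.1 p.2))
        exact hUm.mul ((Complex.continuous_ofReal.comp hCm).mul hEm)) (-R) R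
    refine this.continuousOn.congr ?_
    rintro ⟨k, x⟩ ⟨-, hx⟩
    simp only [Function.uncurry, hv]
    rw [max_eq_left (Set.mem_Ici.1 hx)]
  have ga := slice U hU a hMa
  have key : ∀ K, Tendsto (fun n : ℕ => ∫ k in Set.Icc (-K) K, ‖v (((n : ℝ) + 1) ^ 2) k a‖ ^ 2)
      atTop (𝓝 0) := by
    intro K
    rcases lt_or_ge K 0 with hK | hK
    · have : Set.Icc (-K) K = ∅ := Set.Icc_eq_empty (by linarith)
      simp [this]
    obtain ⟨y, y', cy, cy', dy, dy', ya, ya', C, X0, hC, hb⟩ := airy_family E a K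
    rw [Metric.tendsto_atTop]
    intro η hη
    set τ := η / (4 * (6 * C + 1) * 2) with hτ
    have hτ0 : 0 < τ := by positivity
    obtain ⟨X1, hX1⟩ := (Metric.tendsto_atTop.1 hlim) τ hτ0
    set X := max a (max X0 X1) with hX
    have haX : a ≤ X := le_max_left _ _
    have hX0X : X0 ≤ X := (le_max_left _ _).trans (le_max_right _ _)
    have hX1X : X1 ≤ X := (le_max_right _ _).trans (le_max_right _ _)
    obtain ⟨Y, hY⟩ := (isCompact_Icc.prod isCompact_Icc).exists_bound_of_continuousOn
      (s := Set.Icc (-K) K ×ˢ Set.Icc a (X+1)) cy.continuousOn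
    have hY0 : 0 ≤ Y := (norm_nonneg _).trans (hY (0, a) ⟨⟨by linarith, hK⟩, ⟨le_rfl, by linarith⟩⟩)
    set B := (1 + 2 * (16 + 16 * Real.pi * K) ^ 2) / 2 with hB
    have hB0 : 0 ≤ B := by positivity
    set Q := (X + 1 - a) * (B * Y) with hQ
    have main : ∀ n : ℕ, ∫ k in Set.Icc (-K) K, ‖v (((n : ℝ) + 1) ^ 2) k a‖ ^ 2 ≤
        4 * (2 * K * (Q * (1 / ((n:ℝ) + 1))) ^ 2 + 6 * C * τ) := by
      intro n
      set N := (n : ℝ) + 1 with hN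
      have hN1 : 1 ≤ N := by simp [hN]
      have hN0 : 0 < N := by linarith
      refine freq_estimate E a X K _ C τ haX hK hC (v (N^2)) (hvc _) y y' cy cy' ?_ ?_ ?_
      · intro k hk
        have := ode_ineq M a X (B * (1 / N) * Y) hMa haX (v (N^2) k) (w (N^2) k) (ep (N^2) k) (y k) (y' k)
          (fun x => x + E - (2 * Real.pi * k) ^ 2) (hvd _ k) (fun x hx => hwd _ k x (by positivity) hx)
          (dy k) (dy' k) (ya k) (ya' k) ?_
        · convert this using 4
          rw [hQ]; ring
        · intro x hx
          have h1 := eps_bound (U x) (slice U hU x (lt_of_lt_of_le hMa hx.1)) (hi x hx.1) (hi1 x hx.1)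
            N K k hN1 (abs_le.2 hk)
          have h2 := hY (k, x) ⟨hk, hx⟩
          have e : (1 + 2 * (16 + 16 * Real.pi * K) ^ 2) / (2 * N) = B * (1 / N) := by
            rw [hB]; field_simp
          rw [e] at h1
          exact mul_le_mul h1 h2 (abs_nonneg _) (by positivity)
      · intro x hx k hk
        exact (hb x (hX0X.trans hx.1)).2 k hk
      · intro x hx
        have hax : a ≤ x := haX.trans hx.1
        have h1 := cut_bessel (U x) (slice U hU x (lt_of_lt_of_le hMa hax)) (hi x hax) (N^2) K (by positivity)
        have h2 := hX1 x (hX1X.trans hx.1)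
        have h3 := (hb x (hX0X.trans hx.1)).1
        have h4 : 1 ≤ Real.sqrt (E + x) := Real.one_le_sqrt.2 h3
        rw [Real.dist_eq, sub_zero] at h2
        have h5 := (abs_lt.1 h2).2.le
        have h6 : Real.sqrt (E + x) * (∫ k in Set.Icc (-K) K, ‖v (N^2) k x‖ ^ 2) ≤ τ :=
          (mul_le_mul_of_nonneg_left h1 (Real.sqrt_nonneg _)).trans h5
        have h7 : 0 ≤ ∫ k in Set.Icc (-K) K, ‖v (N^2) k x‖ ^ 2 :=
          integral_nonneg fun k => by positivity
        exact ⟨by nlinarith, h6⟩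
    have t1 : Tendsto (fun n : ℕ => 4 * (2 * K * (Q * (1 / ((n:ℝ) + 1))) ^ 2 + 6 * C * τ)) atTop
        (𝓝 (4 * (2 * K * (Q * 0) ^ 2 + 6 * C * τ))) := by
      have := tendsto_one_div_add_atTop_nhds_zero_nat (𝕜 := ℝ)
      exact (((((this.const_mul Q).pow 2).const_mul (2 * K)).add_const _).const_mul 4)
    have hlt : 4 * (2 * K * (Q * 0) ^ 2 + 6 * C * τ) < η := by
      have : η = 8 * (6 * C + 1) * τ := by rw [hτ]; field_simp; norm_num
      rw [this]; nlinarith [mul_nonneg hC hτ0.le]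
    obtain ⟨n0, hn0⟩ := eventually_atTop.1 (t1.eventually_lt_const hlt)
    refine ⟨n0, fun n hn => ?_⟩
    rw [Real.dist_eq, sub_zero, abs_of_nonneg (integral_nonneg fun k => by positivity)]
    exact (main n).trans_lt (hn0 n hn)
  have hz : U a =ᵐ[volume] 0 := by
    refine fourier_limit_zero (U a)
      ((memLp_two_iff_integrable_sq_norm ga.aestronglyMeasurable).mpr (hi a le_rfl))
      (fun n => cutF (U a) (((n : ℝ) + 1) ^ 2)) (fun n => cutF_integrable _ ga _)
      (fun n => cutF_memLp _ ga (hi a le_rfl) _ (by positivity)) (cutF_tendsto _ ga (hi a le_rfl)) ?_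
    intro K
    refine (key K).congr fun n => ?_
    congr 1; ext k
    rw [cutF_fourier _ _ _ (by positivity)]
  have := (Continuous.ae_eq_iff_eq volume ga (continuous_const (y := (0:ℂ)))).1 hz
  intro t
  exact congrFun this t


lemma mixed_symm (f g : ℝ × ℝ → ℝ) (hf : ContDiff ℝ 1 f) (hg : ContDiff ℝ 1 g)
    (cf : HasCompactSupport f) (cg : HasCompactSupport g) (v w : ℝ × ℝ) :
    ∫ x, fderiv ℝ g x w * fderiv ℝ f x v = ∫ x, fderiv ℝ f x w * fderiv ℝ g x v := by
  obtain ⟨C, lf⟩ := hf.lipschitzWith_of_hasCompactSupport cf (by simp)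
  obtain ⟨D, lg⟩ := hg.lipschitzWith_of_hasCompactSupport cg (by simp)
  have df := hf.differentiable one_ne_zero
  have dg := hg.differentiable one_ne_zero
  have cdf : ∀ v, Continuous (fun x => fderiv ℝ f x v) := fun v =>
    (hf.continuous_fderiv one_ne_zero).clm_apply continuous_const
  have cdg : ∀ v, Continuous (fun x => fderiv ℝ g x v) := fun v =>
    (hg.continuous_fderiv one_ne_zero).clm_apply continuous_const
  have sdf : ∀ v, HasCompactSupport (fun x => fderiv ℝ f x v) := fun v => cf.fderiv_apply ℝ v
  have sdg : ∀ v, HasCompactSupport (fun x => fderiv ℝ g x v) := fun v => cg.fderiv_apply ℝ v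
  have t1 := lg.integral_inv_smul_sub_mul_tendsto_integral_lineDeriv_mul (μ := volume)
    ((cdf v).integrable_of_hasCompactSupport (sdf v)) w
  have t2 := lf.integral_inv_smul_sub_mul_tendsto_integral_lineDeriv_mul (μ := volume)
    ((cdg v).integrable_of_hasCompactSupport (sdg v)) (-w)
  have ldg : ∀ x v, lineDeriv ℝ g x v = fderiv ℝ g x v := fun x v => (dg x).lineDeriv_eq_fderiv
  have ldf : ∀ x v, lineDeriv ℝ f x v = fderiv ℝ f x v := fun x v => (df x).lineDeriv_eq_fderiv
  simp only [ldg, ldf, map_neg] at t1 t2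
  have e : ∀ t : ℝ, ∫ x, (t⁻¹ • (g (x + t • w) - g x)) * fderiv ℝ f x v
      = - ∫ x, (t⁻¹ • (f (x + t • (-w)) - f x)) * fderiv ℝ g x v := by
    intro t
    have dgt : ∀ x, HasFDerivAt (fun x => t⁻¹ • (g (x + t • w) - g x))
        (t⁻¹ • (fderiv ℝ g (x + t • w) - fderiv ℝ g x)) x := fun x =>
      (((hasFDerivAt_comp_add_right (t • w)).2 (dg (x + t • w)).hasFDerivAt).sub (dg x).hasFDerivAt).const_smul t⁻¹
    have cshift : Continuous (fun x => x + t • w) := by fun_prop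
    have cG : Continuous (fun x => t⁻¹ • (g (x + t • w) - g x)) := by
      have := hg.continuous; fun_prop
    have cG' : Continuous (fun x => (t⁻¹ • (fderiv ℝ g (x + t • w) - fderiv ℝ g x)) v) := by
      have := ((cdg v).comp cshift).sub (cdg v)
      exact this.const_smul t⁻¹
    have ibp := integral_mul_fderiv_eq_neg_fderiv_mul_of_integrable (𝕜 := ℝ) (μ := (volume : Measure (ℝ × ℝ)))
      (f := fun x => t⁻¹ • (g (x + t • w) - g x)) (g := f) (v := v)
      (by
        simp only [fun x => (dgt x).fderiv]
        exact (cG'.mul hf.continuous).integrable_of_hasCompactSupport cf.mul_left)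
      ((cG.mul (cdf v)).integrable_of_hasCompactSupport (sdf v).mul_left)
      ((cG.mul hf.continuous).integrable_of_hasCompactSupport cf.mul_left)
      (fun x _ => (dgt x).differentiableAt) (fun x _ => df x)
    rw [ibp]
    simp only [fun x => (dgt x).fderiv]
    congr 1
    have i1 : Integrable (fun x => fderiv ℝ g (x + t • w) v * f x) :=
      (((cdg v).comp cshift).mul hf.continuous).integrable_of_hasCompactSupport cf.mul_left
    have i2 : Integrable (fun x => fderiv ℝ g x v * f x) :=
      ((cdg v).mul hf.continuous).integrable_of_hasCompactSupport cf.mul_left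
    have i3 : Integrable (fun x => fderiv ℝ g x v * f (x - t • w)) :=
      ((cdg v).mul (hf.continuous.comp (by fun_prop))).integrable_of_hasCompactSupport (sdg v).mul_right
    have s : ∫ x, fderiv ℝ g (x + t • w) v * f x = ∫ x, fderiv ℝ g x v * f (x - t • w) := by
      rw [← integral_add_right_eq_self (fun x => fderiv ℝ g x v * f (x - t • w)) (t • w)]
      simp
    calc ∫ x, (t⁻¹ • (fderiv ℝ g (x + t • w) - fderiv ℝ g x)) v * f x
        = ∫ x, t⁻¹ * (fderiv ℝ g (x + t • w) v * f x - fderiv ℝ g x v * f x) := by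
          congr 1; ext x; simp; ring
      _ = ∫ x, t⁻¹ * (fderiv ℝ g x v * f (x - t • w) - fderiv ℝ g x v * f x) := by
          rw [integral_const_mul, integral_const_mul, integral_sub i1 i2, integral_sub i3 i2, s]
      _ = _ := by
          congr 1; ext x; simp only [smul_eq_mul, smul_neg, ← sub_eq_add_neg]; ring
  simp only [e] at t1
  have := tendsto_nhds_unique t1 t2.neg
  rw [this, ← integral_neg]
  congr 1; ext x; ring


lemma poincare_real (a : ℝ × ℝ → ℝ) (ha : ContDiff ℝ 1 a) (ca : HasCompactSupport a) (q r : ℝ)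
    (hs : ∀ p, a p ≠ 0 → |p.1 - q| ≤ r) :
    ∫ p, a p ^ 2 ≤ 4 * r ^ 2 * ∫ p, fderiv ℝ a p (1, 0) ^ 2 := by
  have da := ha.differentiable one_ne_zero
  have cda : Continuous (fun x => fderiv ℝ a x (1, 0)) :=
    (ha.continuous_fderiv one_ne_zero).clm_apply continuous_const
  have sda : HasCompactSupport (fun x => fderiv ℝ a x (1, 0)) := ca.fderiv_apply ℝ _
  have hca := ha.continuous
  have hL : ∀ p : ℝ × ℝ, HasFDerivAt (fun p : ℝ × ℝ => p.1 - q) (ContinuousLinearMap.fst ℝ ℝ ℝ) p :=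
    fun p => (ContinuousLinearMap.fst ℝ ℝ ℝ).hasFDerivAt.sub_const q
  have hA : ∀ p : ℝ × ℝ, HasFDerivAt (fun p => a p ^ 2) ((2 * a p) • fderiv ℝ a p) p := by
    intro p
    have := (da p).hasFDerivAt.pow 2
    simpa using this
  have s2 : HasCompactSupport (fun p => a p ^ 2) :=
    ca.comp_left (g := fun x : ℝ => x ^ 2) (by simp)
  have i0 : Integrable (fun p => a p ^ 2) :=
    (hca.pow 2).integrable_of_hasCompactSupport s2
  have i1 : Integrable (fun p : ℝ × ℝ => (p.1 - q) * (2 * a p * fderiv ℝ a p (1, 0))) := by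
    apply Continuous.integrable_of_hasCompactSupport (by fun_prop)
    exact (sda.mul_left (f := fun p => 2 * a p)).mul_left
  have i2 : Integrable (fun p => fderiv ℝ a p (1, 0) ^ 2) := by
    apply Continuous.integrable_of_hasCompactSupport (by fun_prop)
    exact sda.comp_left (g := fun x : ℝ => x ^ 2) (by simp)
  have ibp := integral_mul_fderiv_eq_neg_fderiv_mul_of_integrable (𝕜 := ℝ) (μ := (volume : Measure (ℝ × ℝ)))
      (f := fun p : ℝ × ℝ => p.1 - q) (g := fun p => a p ^ 2) (v := (1, 0))
      (by simp only [fun p => (hL p).fderiv]; simpa using i0)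
      (by simp only [fun p => (hA p).fderiv]; simpa using i1)
      (by apply Continuous.integrable_of_hasCompactSupport (by fun_prop) s2.mul_left)
      (fun p _ => (hL p).differentiableAt) (fun p _ => (hA p).differentiableAt)
  simp only [fun p => (hL p).fderiv, fun p => (hA p).fderiv] at ibp
  simp only [smul_apply, smul_eq_mul, ContinuousLinearMap.coe_fst', one_mul] at ibp
  have hle : - ∫ p : ℝ × ℝ, (p.1 - q) * (2 * a p * fderiv ℝ a p (1, 0)) ≤
      ∫ p, ((1/2) * a p ^ 2 + 2 * r ^ 2 * fderiv ℝ a p (1, 0) ^ 2) := by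
    rw [← integral_neg]
    apply integral_mono i1.neg ((i0.const_mul _).add (i2.const_mul _))
    intro p
    change -((p.1 - q) * (2 * a p * fderiv ℝ a p (1, 0))) ≤ (1/2) * a p ^ 2 + 2 * r ^ 2 * fderiv ℝ a p (1, 0) ^ 2
    set d := fderiv ℝ a p (1, 0)
    by_cases h : a p = 0
    · simp [h]; positivity
    · have := hs p h
      have h2 : (p.1 - q) ^ 2 ≤ r ^ 2 := sq_le_sq' (abs_le.1 this).1 (abs_le.1 this).2
      nlinarith [sq_nonneg (a p + 2 * (p.1 - q) * d), mul_le_mul_of_nonneg_right h2 (sq_nonneg d)]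
  rw [integral_add (i0.const_mul _) (i2.const_mul _), integral_const_mul, integral_const_mul] at hle
  linarith

lemma dbar_est (g : ℝ × ℝ → ℂ) (hg : ContDiff ℝ 1 g) (cg : HasCompactSupport g) (q r σ : ℝ)
    (hσ : σ ^ 2 = 1) (hs : ∀ p, g p ≠ 0 → |p.1 - q| ≤ r) :
    ∫ p, ‖g p‖ ^ 2 ≤ 4 * r ^ 2 * ∫ p, ‖fderiv ℝ g p (1, 0) + σ * Complex.I * fderiv ℝ g p (0, 1)‖ ^ 2 := by
  set a : ℝ × ℝ → ℝ := fun p => (g p).re with ha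
  set b : ℝ × ℝ → ℝ := fun p => (g p).im with hb
  have ha1 : ContDiff ℝ 1 a := Complex.reCLM.contDiff.comp hg
  have hb1 : ContDiff ℝ 1 b := Complex.imCLM.contDiff.comp hg
  have ca : HasCompactSupport a := cg.comp_left (g := Complex.re) rfl
  have cb : HasCompactSupport b := cg.comp_left (g := Complex.im) rfl
  have dg := hg.differentiable one_ne_zero
  have da : ∀ p v, fderiv ℝ a p v = (fderiv ℝ g p v).re := by
    intro p v
    have := (Complex.reCLM.hasFDerivAt.comp p (dg p).hasFDerivAt).fderiv
    change fderiv ℝ a p = _ at this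
    rw [this]; rfl
  have db : ∀ p v, fderiv ℝ b p v = (fderiv ℝ g p v).im := by
    intro p v
    have := (Complex.imCLM.hasFDerivAt.comp p (dg p).hasFDerivAt).fderiv
    change fderiv ℝ b p = _ at this
    rw [this]; rfl
  have c1 : ∀ f : ℝ × ℝ → ℝ, ContDiff ℝ 1 f → ∀ v, Continuous (fun x => fderiv ℝ f x v) := fun f hf v =>
    (hf.continuous_fderiv one_ne_zero).clm_apply continuous_const
  have ii : ∀ f1 f2 : ℝ × ℝ → ℝ, ContDiff ℝ 1 f1 → HasCompactSupport f1 → ContDiff ℝ 1 f2 →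
      ∀ v w, Integrable (fun p => fderiv ℝ f1 p v * fderiv ℝ f2 p w) := by
    intro f1 f2 h1 s1 h2 v w
    exact ((c1 f1 h1 v).mul (c1 f2 h2 w)).integrable_of_hasCompactSupport
      (s1.fderiv_apply ℝ v).mul_right
  have i2 : ∀ f : ℝ × ℝ → ℝ, ContDiff ℝ 1 f → HasCompactSupport f → ∀ v,
      Integrable (fun p => fderiv ℝ f p v ^ 2) := by
    intro f h s v
    simpa [sq] using ii f f h s h v v
  have j2 : ∀ f : ℝ × ℝ → ℝ, ContDiff ℝ 1 f → HasCompactSupport f →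
      Integrable (fun p => f p ^ 2) := by
    intro f h s
    have hs2 : HasCompactSupport (fun p => f p ^ 2) :=
      s.comp_left (g := fun x : ℝ => x ^ 2) (by simp)
    have hc2 : Continuous (fun p => f p ^ 2) := h.continuous.pow 2
    exact hc2.integrable_of_hasCompactSupport hs2
  have pa := poincare_real a ha1 ca q r (fun p hp => hs p (fun h => hp (by simp [ha, h])))
  have pb := poincare_real b hb1 cb q r (fun p hp => hs p (fun h => hp (by simp [hb, h])))
  have e0 : ∫ p, ‖g p‖ ^ 2 = (∫ p, a p ^ 2) + ∫ p, b p ^ 2 := by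
    rw [← integral_add (j2 a ha1 ca) (j2 b hb1 cb)]
    congr 1; ext p; rw [← Complex.normSq_eq_norm_sq, Complex.normSq_apply]; simp only [ha, hb]; ring
  have m := mixed_symm a b ha1 hb1 ca cb (1, 0) (0, 1)
  have e1 : ∫ p, ‖fderiv ℝ g p (1, 0) + σ * Complex.I * fderiv ℝ g p (0, 1)‖ ^ 2
      = (∫ p, fderiv ℝ a p (1, 0) ^ 2) + (∫ p, fderiv ℝ b p (1, 0) ^ 2)
        + (∫ p, fderiv ℝ a p (0, 1) ^ 2) + (∫ p, fderiv ℝ b p (0, 1) ^ 2)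
        + 2 * σ * ((∫ p, fderiv ℝ a p (0, 1) * fderiv ℝ b p (1, 0))
          - ∫ p, fderiv ℝ b p (0, 1) * fderiv ℝ a p (1, 0)) := by
    have k1 := i2 a ha1 ca (1, 0)
    have k2 := i2 b hb1 cb (1, 0)
    have k3 := i2 a ha1 ca (0, 1)
    have k4 := i2 b hb1 cb (0, 1)
    have k5 := ii a b ha1 ca hb1 (0, 1) (1, 0)
    have k6 := ii b a hb1 cb ha1 (0, 1) (1, 0)
    have k56 : Integrable (fun p => 2 * σ * (fderiv ℝ a p (0, 1) * fderiv ℝ b p (1, 0)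
        - fderiv ℝ b p (0, 1) * fderiv ℝ a p (1, 0))) := (k5.sub k6).const_mul _
    rw [← integral_sub k5 k6, ← integral_const_mul, ← integral_add k1 k2,
      ← integral_add (k1.fun_add k2) k3, ← integral_add ((k1.fun_add k2).fun_add k3) k4,
      ← integral_add (((k1.fun_add k2).fun_add k3).fun_add k4) k56]
    congr 1; ext p
    simp only [da, db]
    rw [← Complex.normSq_eq_norm_sq, Complex.normSq_apply]
    simp only [Complex.add_re, Complex.add_im, Complex.mul_re, Complex.mul_im, Complex.ofReal_re,
      Complex.ofReal_im, Complex.I_re, Complex.I_im]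
    linear_combination ((fderiv ℝ g p (0, 1)).re ^ 2 + (fderiv ℝ g p (0, 1)).im ^ 2) * hσ
  rw [e0, e1, m, sub_self, mul_zero, add_zero]
  have n1 : 0 ≤ ∫ p, fderiv ℝ a p (0, 1) ^ 2 := integral_nonneg fun p => sq_nonneg _
  have n2 : 0 ≤ ∫ p, fderiv ℝ b p (0, 1) ^ 2 := integral_nonneg fun p => sq_nonneg _
  nlinarith [mul_nonneg (sq_nonneg r) n1, mul_nonneg (sq_nonneg r) n2]


noncomputable def zt (σ : ℝ) (q p : ℝ × ℝ) : ℂ :=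
  ((p.1 - q.1 : ℝ) : ℂ) + σ * Complex.I * ((p.2 - q.2 : ℝ) : ℂ)

noncomputable def rho (q p : ℝ × ℝ) : ℝ := (p.1 - q.1) ^ 2 + (p.2 - q.2) ^ 2

lemma zt_normSq (σ : ℝ) (hσ : σ ^ 2 = 1) (q p : ℝ × ℝ) : ‖zt σ q p‖ ^ 2 = rho q p := by
  rw [← Complex.normSq_eq_norm_sq, Complex.normSq_apply, zt, rho]
  simp only [Complex.add_re, Complex.add_im, Complex.mul_re, Complex.mul_im, Complex.ofReal_re,
      Complex.ofReal_im, Complex.I_re, Complex.I_im]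
  linear_combination (p.2 - q.2) ^ 2 * hσ

lemma rho_pos (q p : ℝ × ℝ) (h : p ≠ q) : 0 < rho q p := by
  rw [rho]
  by_contra hc
  apply h
  have h1 : (p.1 - q.1) ^ 2 = 0 := by nlinarith [sq_nonneg (p.1 - q.1), sq_nonneg (p.2 - q.2)]
  have h2 : (p.2 - q.2) ^ 2 = 0 := by nlinarith [sq_nonneg (p.1 - q.1), sq_nonneg (p.2 - q.2)]
  ext
  · nlinarith [pow_eq_zero_iff (two_ne_zero) |>.1 h1]
  · nlinarith [pow_eq_zero_iff (two_ne_zero) |>.1 h2]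

lemma zt_ne (σ : ℝ) (hσ : σ ^ 2 = 1) (q p : ℝ × ℝ) (h : p ≠ q) : zt σ q p ≠ 0 := by
  intro h0
  have := zt_normSq σ hσ q p
  rw [h0] at this
  have := rho_pos q p h
  simp at *
  linarith

lemma zt_contDiff (σ : ℝ) (q : ℝ × ℝ) : ContDiff ℝ 1 (zt σ q) := by
  unfold zt
  have h1 : ContDiff ℝ 1 (fun p : ℝ × ℝ => ((p.1 - q.1 : ℝ) : ℂ)) :=
    Complex.ofRealCLM.contDiff.comp (contDiff_fst.sub contDiff_const)
  have h2 : ContDiff ℝ 1 (fun p : ℝ × ℝ => ((p.2 - q.2 : ℝ) : ℂ)) :=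
    Complex.ofRealCLM.contDiff.comp (contDiff_snd.sub contDiff_const)
  exact h1.add (contDiff_const.mul h2)

lemma zt_fderiv (σ : ℝ) (q p v : ℝ × ℝ) : fderiv ℝ (zt σ q) p v = (v.1 : ℂ) + σ * Complex.I * (v.2 : ℂ) := by
  have h1 : HasFDerivAt (fun p : ℝ × ℝ => ((p.1 - q.1 : ℝ) : ℂ))
      (Complex.ofRealCLM.comp (ContinuousLinearMap.fst ℝ ℝ ℝ)) p :=
    Complex.ofRealCLM.hasFDerivAt.comp p ((ContinuousLinearMap.fst ℝ ℝ ℝ).hasFDerivAt.sub_const q.1)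
  have h2 : HasFDerivAt (fun p : ℝ × ℝ => ((p.2 - q.2 : ℝ) : ℂ))
      (Complex.ofRealCLM.comp (ContinuousLinearMap.snd ℝ ℝ ℝ)) p :=
    Complex.ofRealCLM.hasFDerivAt.comp p ((ContinuousLinearMap.snd ℝ ℝ ℝ).hasFDerivAt.sub_const q.2)
  have h3 : HasFDerivAt (zt σ q) _ p := h1.add (h2.const_mul (σ * Complex.I))
  rw [h3.fderiv]
  simp

lemma weighted_first (σ : ℝ) (hσ : σ ^ 2 = 1) (q : ℝ × ℝ) (r : ℝ) (ψ : ℝ × ℝ → ℂ)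
    (hψ : ContDiff ℝ 1 ψ) (cψ : HasCompactSupport ψ) (hq : ψ =ᶠ[𝓝 q] 0)
    (hs : ∀ p, ψ p ≠ 0 → |p.1 - q.1| ≤ r) (n : ℕ) :
    ∫ p, ‖ψ p‖ ^ 2 * (rho q p)⁻¹ ^ n ≤ 4 * r ^ 2 *
      ∫ p, ‖fderiv ℝ ψ p (1, 0) + σ * Complex.I * fderiv ℝ ψ p (0, 1)‖ ^ 2 * (rho q p)⁻¹ ^ n := by
  set h : ℝ × ℝ → ℂ := fun p => ψ p * ((zt σ q p)⁻¹) ^ n with hh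
  have hw : ∀ p, ‖((zt σ q p)⁻¹) ^ n‖ ^ 2 = (rho q p)⁻¹ ^ n := by
    intro p
    rw [← zt_normSq σ hσ, norm_pow, norm_inv, ← pow_mul, mul_comm n 2, pow_mul, inv_pow]
  have hq' : h =ᶠ[𝓝 q] 0 := by
    filter_upwards [hq] with p hp
    simp [hh, hp]
  have dψ := hψ.differentiable one_ne_zero
  have hzc : ∀ p, p ≠ q → ContDiffAt ℝ 1 (fun p => ((zt σ q p)⁻¹) ^ n) p := fun p hp =>
    ((zt_contDiff σ q).contDiffAt.inv (zt_ne σ hσ q p hp)).pow n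
  have hC : ContDiff ℝ 1 h := by
    rw [contDiff_iff_contDiffAt]
    intro p
    by_cases hp : p = q
    · subst hp
      exact contDiffAt_const.congr_of_eventuallyEq hq'
    · exact hψ.contDiffAt.mul (hzc p hp)
  have hcs : HasCompactSupport h := cψ.mul_right
  have hd : ∀ p, fderiv ℝ h p (1, 0) + σ * Complex.I * fderiv ℝ h p (0, 1)
      = (fderiv ℝ ψ p (1, 0) + σ * Complex.I * fderiv ℝ ψ p (0, 1)) * ((zt σ q p)⁻¹) ^ n := by
    intro p
    by_cases hp : p = q
    · subst hp
      rw [hq'.fderiv_eq, hq.fderiv_eq]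
      simp
    · have hz : HasFDerivAt (zt σ q) (fderiv ℝ (zt σ q) p) p :=
        ((zt_contDiff σ q).differentiable one_ne_zero p).hasFDerivAt
      have hne := zt_ne σ hσ q p hp
      have hF : HasDerivAt (fun z : ℂ => (z⁻¹) ^ n)
          ((n : ℂ) * ((zt σ q p)⁻¹) ^ (n - 1) * (-((zt σ q p) ^ 2)⁻¹)) (zt σ q p) :=
        (hasDerivAt_inv hne).pow n
      have hzi : HasFDerivAt (fun p => ((zt σ q p)⁻¹) ^ n) _ p :=
        hF.comp_hasFDerivAt_of_eq p hz rfl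
      have := ((dψ p).hasFDerivAt.mul hzi).fderiv
      change fderiv ℝ h p = _ at this
      rw [this]
      simp only [add_apply, smul_apply, smul_eq_mul, zt_fderiv]
      simp only [Complex.ofReal_one, Complex.ofReal_zero]
      have hs2 : ((σ : ℂ)) ^ 2 = 1 := by exact_mod_cast hσ
      have hI := Complex.I_sq
      set A := (n : ℂ) * ((zt σ q p)⁻¹) ^ (n - 1) * (-((zt σ q p) ^ 2)⁻¹)
      linear_combination ψ p * A * (σ ^ 2 * hI - hs2)
  have := dbar_est h hC hcs q.1 r σ hσ (fun p hp => hs p (fun h0 => hp (by simp [hh, h0])))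
  simp only [hd] at this
  simp only [hh, norm_mul, mul_pow, hw] at this
  exact this

noncomputable def lapl (φ : ℝ × ℝ → ℂ) (p : ℝ × ℝ) : ℂ :=
  fderiv ℝ (fun p => fderiv ℝ φ p (1, 0)) p (1, 0) + fderiv ℝ (fun p => fderiv ℝ φ p (0, 1)) p (0, 1)

lemma carleman (q : ℝ × ℝ) (r : ℝ) (φ : ℝ × ℝ → ℂ)
    (hφ : ContDiff ℝ 2 φ) (cφ : HasCompactSupport φ) (hq : φ =ᶠ[𝓝 q] 0)
    (hs : tsupport φ ⊆ {p | |p.1 - q.1| ≤ r}) (n : ℕ) :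
    ∫ p, ‖φ p‖ ^ 2 * (rho q p)⁻¹ ^ n ≤ 16 * r ^ 4 *
      ∫ p, ‖lapl φ p‖ ^ 2 * (rho q p)⁻¹ ^ n := by
  have h1 := weighted_first 1 (by norm_num) q r φ (hφ.of_le (by norm_num)) cφ hq
    (fun p hp => hs (subset_tsupport _ hp)) n
  set ψ : ℝ × ℝ → ℂ := fun p => fderiv ℝ φ p (1, 0) + (1 : ℝ) * Complex.I * fderiv ℝ φ p (0, 1) with hψ
  have hfd : ContDiff ℝ 1 (fderiv ℝ φ) := hφ.fderiv_right (by norm_num)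
  have hfv : ∀ v, ContDiff ℝ 1 (fun p => fderiv ℝ φ p v) := fun v => hfd.clm_apply contDiff_const
  have hψ1 : ContDiff ℝ 1 ψ := (hfv _).add (contDiff_const.mul (hfv _))
  have hψs : ∀ p, ψ p ≠ 0 → p ∈ tsupport φ := by
    intro p hp
    by_contra hc
    have : fderiv ℝ φ p = 0 := image_eq_zero_of_notMem_tsupport (fun h => hc (tsupport_fderiv_subset ℝ h))
    exact hp (by simp [hψ, this])
  have hψc : HasCompactSupport ψ := HasCompactSupport.intro cφ (fun p hp => by
    by_contra h; exact hp (hψs p h))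
  have hψq : ψ =ᶠ[𝓝 q] 0 := by
    filter_upwards [hq.fderiv (𝕜 := ℝ)] with p hp
    simp [hψ, hp]
  have h2 := weighted_first (-1) (by norm_num) q r ψ hψ1 hψc hψq (fun p hp => hs (hψs p hp)) n
  have hl : ∀ p, fderiv ℝ ψ p (1, 0) + ((-1 : ℝ) : ℂ) * Complex.I * fderiv ℝ ψ p (0, 1) = lapl φ p := by
    intro p
    have d : ∀ v, HasFDerivAt (fun p => fderiv ℝ φ p v) (fderiv ℝ (fun p => fderiv ℝ φ p v) p) p :=
      fun v => ((hfv v).differentiable one_ne_zero p).hasFDerivAt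
    have e : fderiv ℝ ψ p = _ := ((d (1, 0)).add ((d (0, 1)).const_mul (((1 : ℝ) : ℂ) * Complex.I))).fderiv
    have sym : fderiv ℝ (fun p => fderiv ℝ φ p (1, 0)) p (0, 1)
        = fderiv ℝ (fun p => fderiv ℝ φ p (0, 1)) p (1, 0) := by
      have hs := (hφ.contDiffAt (x := p)).isSymmSndFDerivAt (by simp)
      have d2 := (hfd.differentiable one_ne_zero p)
      have ap : ∀ v w, fderiv ℝ (fun p => fderiv ℝ φ p v) p w = fderiv ℝ (fderiv ℝ φ) p w v := by
        intro v w
        rw [fderiv_clm_apply d2 (differentiableAt_const v)]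
        simp
      rw [ap, ap]
      exact hs.eq _ _
    rw [e, lapl]
    simp only [add_apply, smul_apply, smul_eq_mul]
    rw [sym]
    have hI := Complex.I_sq
    push_cast
    linear_combination (-(fderiv ℝ (fun p => fderiv ℝ φ p (0, 1)) p) (0, 1)) * hI
  simp only [hl] at h2
  have : 4 * r ^ 2 * ∫ p, ‖ψ p‖ ^ 2 * (rho q p)⁻¹ ^ n ≤ 4 * r ^ 2 * (4 * r ^ 2 *
      ∫ p, ‖lapl φ p‖ ^ 2 * (rho q p)⁻¹ ^ n) := mul_le_mul_of_nonneg_left h2 (by positivity)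
  calc _ ≤ _ := h1
    _ ≤ _ := this
    _ = _ := by ring


lemma rho_continuous (q : ℝ × ℝ) : Continuous (rho q) := by unfold rho; fun_prop

lemma weighted_continuous (q : ℝ × ℝ) (φ : ℝ × ℝ → ℂ) (hφ : Continuous φ) (hq : φ =ᶠ[𝓝 q] 0) (n : ℕ) :
    Continuous (fun p => ‖φ p‖ ^ 2 * (rho q p)⁻¹ ^ n) := by
  rw [continuous_iff_continuousAt]
  intro p
  by_cases hp : p = q
  · subst hp
    have : (fun x => ‖φ x‖ ^ 2 * (rho p x)⁻¹ ^ n) =ᶠ[𝓝 p] fun _ => 0 := by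
      filter_upwards [hq] with x hx
      simp [hx]
    exact continuousAt_const.congr this.symm
  · exact (hφ.continuousAt.norm.pow 2).mul
      (((rho_continuous q).continuousAt.inv₀ (rho_pos q p hp).ne').pow n)

lemma lapl_congr {f g : ℝ × ℝ → ℂ} {p : ℝ × ℝ} (h : f =ᶠ[𝓝 p] g) : lapl f p = lapl g p := by
  have h1 : ∀ v, (fun p => fderiv ℝ f p v) =ᶠ[𝓝 p] fun p => fderiv ℝ g p v := by
    intro v
    filter_upwards [h.fderiv (𝕜 := ℝ)] with x hx
    rw [hx]
  rw [lapl, lapl, (h1 _).fderiv_eq, (h1 _).fderiv_eq]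

lemma lapl_zero (p : ℝ × ℝ) : lapl (0 : ℝ × ℝ → ℂ) p = 0 := by simp [lapl]

lemma lapl_continuous (φ : ℝ × ℝ → ℂ) (hφ : ContDiff ℝ 2 φ) : Continuous (lapl φ) := by
  have hfd : ContDiff ℝ 1 (fderiv ℝ φ) := hφ.fderiv_right (by norm_num)
  have hfv : ∀ v, ContDiff ℝ 1 (fun p => fderiv ℝ φ p v) := fun v => hfd.clm_apply contDiff_const
  have : ∀ v, Continuous (fun p => fderiv ℝ (fun p => fderiv ℝ φ p v) p v) := fun v =>
    ((hfv v).continuous_fderiv one_ne_zero).clm_apply continuous_const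
  exact (this _).add (this _)

lemma local_vanish (U : Set (ℝ × ℝ)) (hU : IsOpen U) (q : ℝ × ℝ) (r V0 : ℝ) (hr : 0 < r)
    (hV0 : 0 ≤ V0) (hrV : 16 * r ^ 4 * V0 ^ 2 ≤ 1 / 2) (hsub : Metric.closedBall q r ⊆ U)
    (u : ℝ × ℝ → ℂ) (hu : ContDiffOn ℝ 2 u U)
    (hle : ∀ p ∈ Metric.closedBall q r, ‖lapl u p‖ ≤ V0 * ‖u p‖) (hq : u =ᶠ[𝓝 q] 0) :
    ∀ p, rho q p < (r / 2) ^ 2 → u p = 0 := by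
  let χ : ContDiffBump q := ⟨r / 2, r, by positivity, by linarith⟩
  set φ : ℝ × ℝ → ℂ := fun p => (χ p : ℂ) * u p with hφ
  have hχC : ContDiff ℝ 2 (fun p => (χ p : ℂ)) := Complex.ofRealCLM.contDiff.comp χ.contDiff
  have hts : tsupport φ ⊆ Metric.closedBall q r := by
    apply closure_minimal _ Metric.isClosed_closedBall
    intro p hp
    have : χ p ≠ 0 := fun h => hp (by simp [hφ, h])
    have h2 : p ∈ Function.support χ := this
    rw [χ.support_eq] at h2
    exact Metric.ball_subset_closedBall h2
  have cφ : HasCompactSupport φ :=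
    HasCompactSupport.of_support_subset_isCompact (isCompact_closedBall q r)
      ((subset_tsupport _).trans hts)
  have hφC : ContDiff ℝ 2 φ := by
    rw [contDiff_iff_contDiffAt]
    intro p
    by_cases hp : p ∈ U
    · exact hχC.contDiffAt.mul (hu.contDiffAt (hU.mem_nhds hp))
    · have : p ∉ tsupport φ := fun h => hp (hsub (hts h))
      exact contDiffAt_const.congr_of_eventuallyEq (notMem_tsupport_iff_eventuallyEq.1 this)
  have hφq : φ =ᶠ[𝓝 q] 0 := by
    filter_upwards [hq] with p hp
    simp [hφ, hp]
  have hφu : ∀ p ∈ Metric.ball q (r / 2), φ =ᶠ[𝓝 p] u := by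
    intro p hp
    filter_upwards [Metric.isOpen_ball.mem_nhds hp] with x hx
    have : χ x = 1 := χ.one_of_mem_closedBall (Metric.ball_subset_closedBall hx)
    simp [hφ, this]
  have hcont := hφC.continuous
  have hlc := lapl_continuous φ hφC
  have hls : HasCompactSupport (lapl φ) := HasCompactSupport.intro cφ (fun p hp => by
    rw [lapl_congr (notMem_tsupport_iff_eventuallyEq.1 hp), lapl_zero])
  have iL : Integrable (fun p => ‖lapl φ p‖ ^ 2) := by
    have h1 : HasCompactSupport (fun p => ‖lapl φ p‖ ^ 2) :=
      hls.comp_left (g := fun z : ℂ => ‖z‖ ^ 2) (by simp)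
    have h2 : Continuous (fun p => ‖lapl φ p‖ ^ 2) := by fun_prop
    exact h2.integrable_of_hasCompactSupport h1
  have iφ : ∀ n : ℕ, Integrable (fun p => ‖φ p‖ ^ 2 * (rho q p)⁻¹ ^ n) := by
    intro n
    have h0 : HasCompactSupport (fun p => ‖φ p‖ ^ 2) :=
      cφ.comp_left (g := fun z : ℂ => ‖z‖ ^ 2) (by simp)
    have h1 : HasCompactSupport (fun p => ‖φ p‖ ^ 2 * (rho q p)⁻¹ ^ n) := h0.mul_right
    exact (weighted_continuous q φ hcont hφq n).integrable_of_hasCompactSupport h1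
  have hrho_out : ∀ p, p ∉ Metric.ball q (r / 2) → (r / 2) ^ 2 ≤ rho q p := by
    intro p hp
    rw [Metric.mem_ball, not_lt, Prod.dist_eq, Real.dist_eq, Real.dist_eq, le_max_iff] at hp
    rw [rho]
    rcases hp with h | h
    · have := pow_le_pow_left₀ (by positivity) h 2
      rw [sq_abs] at this
      nlinarith [sq_nonneg (p.2 - q.2)]
    · have := pow_le_pow_left₀ (by positivity) h 2
      rw [sq_abs] at this
      nlinarith [sq_nonneg (p.1 - q.1)]
  set L := ∫ p, ‖lapl φ p‖ ^ 2 with hL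
  have hL0 : 0 ≤ L := integral_nonneg fun p => by positivity
  have hrho0 : ∀ p, 0 ≤ rho q p := fun p => by rw [rho]; positivity
  have main : ∀ n : ℕ, ∫ p, ‖φ p‖ ^ 2 * (rho q p)⁻¹ ^ n ≤ 32 * r ^ 4 * (L * (((r / 2) ^ 2)⁻¹) ^ n) := by
    intro n
    have h1 := carleman q r φ hφC cφ hφq (fun p hp => by
      have := hts hp
      rw [Metric.mem_closedBall, Prod.dist_eq, Real.dist_eq] at this
      exact (le_max_left _ _).trans this) n
    have h2 : ∫ p, ‖lapl φ p‖ ^ 2 * (rho q p)⁻¹ ^ n ≤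
        ∫ p, (V0 ^ 2 * (‖φ p‖ ^ 2 * (rho q p)⁻¹ ^ n) + ‖lapl φ p‖ ^ 2 * (((r / 2) ^ 2)⁻¹) ^ n) := by
      apply integral_mono_of_nonneg
      · refine Eventually.of_forall fun p => ?_
        have := hrho0 p
        change 0 ≤ ‖lapl φ p‖ ^ 2 * (rho q p)⁻¹ ^ n
        positivity
      · exact ((iφ n).const_mul _).add (iL.mul_const _)
      · refine Eventually.of_forall fun p => ?_
        have hp0 := hrho0 p
        change ‖lapl φ p‖ ^ 2 * (rho q p)⁻¹ ^ n ≤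
          V0 ^ 2 * (‖φ p‖ ^ 2 * (rho q p)⁻¹ ^ n) + ‖lapl φ p‖ ^ 2 * (((r / 2) ^ 2)⁻¹) ^ n
        by_cases hp : p ∈ Metric.ball q (r / 2)
        · have h3 := hle p (Metric.ball_subset_closedBall (Metric.ball_subset_ball (by linarith) hp))
          rw [lapl_congr (hφu p hp), (hφu p hp).eq_of_nhds]
          have h4 : ‖lapl u p‖ ^ 2 ≤ V0 ^ 2 * ‖u p‖ ^ 2 := by
            rw [← mul_pow]; exact pow_le_pow_left₀ (norm_nonneg _) h3 2
          have h5 : ‖lapl u p‖ ^ 2 * (rho q p)⁻¹ ^ n ≤ V0 ^ 2 * ‖u p‖ ^ 2 * (rho q p)⁻¹ ^ n :=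
            mul_le_mul_of_nonneg_right h4 (by positivity)
          have h6 : 0 ≤ ‖lapl u p‖ ^ 2 * (((r / 2) ^ 2)⁻¹) ^ n := by positivity
          linarith
        · have h3 := hrho_out p hp
          have h4 : (rho q p)⁻¹ ^ n ≤ (((r / 2) ^ 2)⁻¹) ^ n :=
            pow_le_pow_left₀ (by positivity) (inv_anti₀ (by positivity) h3) n
          have h5 := mul_le_mul_of_nonneg_left h4 (sq_nonneg ‖lapl φ p‖)
          have h6 : 0 ≤ V0 ^ 2 * (‖φ p‖ ^ 2 * (rho q p)⁻¹ ^ n) := by positivity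
          linarith
    rw [integral_add ((iφ n).const_mul _) (iL.mul_const _), integral_const_mul, integral_mul_const] at h2
    have hI0 : 0 ≤ ∫ p, ‖φ p‖ ^ 2 * (rho q p)⁻¹ ^ n :=
      integral_nonneg fun p => by have := hrho0 p; positivity
    set I := ∫ p, ‖φ p‖ ^ 2 * (rho q p)⁻¹ ^ n
    have h3 := mul_le_mul_of_nonneg_left h2 (by positivity : (0:ℝ) ≤ 16 * r ^ 4)
    have h4 := mul_le_mul_of_nonneg_right hrV hI0
    have h5 : 16 * r ^ 4 * (V0 ^ 2 * I + L * (((r / 2) ^ 2)⁻¹) ^ n)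
      = 16 * r ^ 4 * V0 ^ 2 * I + 16 * r ^ 4 * (L * (((r / 2) ^ 2)⁻¹) ^ n) := by ring
    have : I ≤ 16 * r ^ 4 * V0 ^ 2 * I + 16 * r ^ 4 * (L * (((r / 2) ^ 2)⁻¹) ^ n) :=
      h5 ▸ h1.trans h3
    linarith
  intro p0 hp0
  obtain ⟨s, hs1, hs2⟩ := exists_between hp0
  have hs0 : 0 < s := (hrho0 p0).trans_lt hs1
  set A : Set (ℝ × ℝ) := {p | rho q p < s} with hA
  have hAo : IsOpen A := isOpen_lt (rho_continuous q) continuous_const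
  have i0 : Integrable (fun p => ‖φ p‖ ^ 2) := by simpa using iφ 0
  have hAn : ∀ n : ℕ, ∫ p in A, ‖φ p‖ ^ 2 ≤ 32 * r ^ 4 * L * (s * ((r / 2) ^ 2)⁻¹) ^ n := by
    intro n
    have h1 : ∫ p in A, ‖φ p‖ ^ 2 ≤ ∫ p in A, s ^ n * (‖φ p‖ ^ 2 * (rho q p)⁻¹ ^ n) := by
      apply setIntegral_mono_on i0.integrableOn ((iφ n).const_mul _).integrableOn hAo.measurableSet
      intro p hp
      by_cases hpq : p = q
      · have : φ p = 0 := by rw [hpq]; exact hφq.eq_of_nhds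
        simp [this]
      · have hpos := rho_pos q p hpq
        have : 1 ≤ (s * (rho q p)⁻¹) ^ n := by
          apply one_le_pow₀
          rw [← div_eq_mul_inv, one_le_div hpos]
          exact le_of_lt hp
        have h2 := mul_le_mul_of_nonneg_left this (sq_nonneg ‖φ p‖)
        rw [mul_pow] at h2
        linarith
    have h2 : ∫ p in A, s ^ n * (‖φ p‖ ^ 2 * (rho q p)⁻¹ ^ n) ≤
        ∫ p, s ^ n * (‖φ p‖ ^ 2 * (rho q p)⁻¹ ^ n) :=
      setIntegral_le_integral ((iφ n).const_mul _) (Eventually.of_forall fun p => by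
        have := hrho0 p
        change 0 ≤ s ^ n * (‖φ p‖ ^ 2 * (rho q p)⁻¹ ^ n)
        positivity)
    have h2' := h2.trans_eq (integral_const_mul _ _)
    have h3 := mul_le_mul_of_nonneg_left (main n) (by positivity : (0:ℝ) ≤ s ^ n)
    rw [mul_pow]
    calc _ ≤ _ := h1
      _ ≤ _ := h2'
      _ ≤ _ := h3
      _ = _ := by ring
  have hlt : s * ((r / 2) ^ 2)⁻¹ < 1 := by
    rw [← div_eq_mul_inv, div_lt_one (by positivity)]; exact hs2
  have ht := (tendsto_pow_atTop_nhds_zero_of_lt_one (by positivity) hlt).const_mul (32 * r ^ 4 * L)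
  rw [mul_zero] at ht
  have hz : ∫ p in A, ‖φ p‖ ^ 2 = 0 :=
    le_antisymm (ge_of_tendsto' ht hAn) (integral_nonneg fun p => by positivity)
  rw [setIntegral_eq_zero_iff_of_nonneg_ae (Eventually.of_forall fun p => by
    change (0:ℝ) ≤ ‖φ p‖ ^ 2; positivity) i0.integrableOn] at hz
  have hae : φ =ᵐ[volume.restrict A] (fun _ => 0) := by
    filter_upwards [hz] with p hp
    simpa using hp
  have heq := Measure.eqOn_open_of_ae_eq hae hAo hcont.continuousOn continuousOn_const
  have h0 : φ p0 = 0 := heq hs1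
  have hb : p0 ∈ Metric.ball q (r / 2) := by
    by_contra hc
    linarith [hrho_out p0 hc]
  rw [← (hφu p0 hb).eq_of_nhds, h0]

lemma unique_cont (E : ℝ) (W : Set (ℝ × ℝ)) (hW : IsOpen W) (hc : IsPreconnected W)
    (u : ℝ × ℝ → ℂ) (hu : ContDiffOn ℝ 2 u W)
    (hpde : ∀ p ∈ W, lapl u p + ((E + p.2 : ℝ) : ℂ) * u p = 0)
    (z : ℝ × ℝ) (hz : z ∈ W) (hz0 : u =ᶠ[𝓝 z] 0) : ∀ p ∈ W, u p = 0 := by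
  set Z : Set (ℝ × ℝ) := {p | ∀ᶠ x in 𝓝 p, u x = 0} with hZ
  have hZo : IsOpen Z := isOpen_setOfPred_eventually_nhds
  have hsub : W ⊆ Z := by
    refine hc.subset_of_closure_inter_subset hZo ⟨z, hz, hz0⟩ ?_
    rintro p ⟨hpc, hpW⟩
    obtain ⟨ε, hε, hball⟩ := Metric.isOpen_iff.1 hW p hpW
    set V0 := |E| + |p.2| + 2 with hV0
    have hV2 : 2 ≤ V0 := by rw [hV0]; linarith [abs_nonneg E, abs_nonneg p.2]
    set r := min (ε / 4) (1 / (6 * V0)) with hr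
    have hr0 : 0 < r := by rw [hr]; positivity
    have hr1 : r ≤ ε / 4 := min_le_left _ _
    have hr2 : r ≤ 1 / (6 * V0) := min_le_right _ _
    have hrV : r * V0 ≤ 1 / 6 := by
      calc r * V0 ≤ 1 / (6 * V0) * V0 := mul_le_mul_of_nonneg_right hr2 (by linarith)
        _ = 1 / 6 := by field_simp
    have hrh : r ≤ 1 / 12 := by nlinarith
    obtain ⟨q, hqZ, hqd⟩ := Metric.mem_closure_iff.1 hpc (r / 8) (by positivity)
    have hqb : Metric.closedBall q r ⊆ Metric.ball p (2 * r) := by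
      intro x hx
      rw [Metric.mem_closedBall] at hx
      rw [Metric.mem_ball]
      have := dist_triangle x q p
      rw [dist_comm q p] at this
      linarith
    have hqW : Metric.closedBall q r ⊆ W :=
      hqb.trans ((Metric.ball_subset_ball (by linarith)).trans hball)
    have key := local_vanish W hW q r V0 hr0 (by linarith) ?_ hqW u hu ?_ hqZ
    · change ∀ᶠ x in 𝓝 p, u x = 0
      filter_upwards [Metric.ball_mem_nhds p (by positivity : 0 < r / 8)] with x hx
      apply key
      rw [Metric.mem_ball] at hx
      have h1 : dist x q < r / 4 := by
        have := dist_triangle x p q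
        linarith
      rw [Prod.dist_eq, max_lt_iff, Real.dist_eq, Real.dist_eq] at h1
      have h2 : (x.1 - q.1) ^ 2 ≤ (r / 4) ^ 2 := sq_le_sq' (by linarith [(abs_lt.1 h1.1).1]) (abs_lt.1 h1.1).2.le
      have h3 : (x.2 - q.2) ^ 2 ≤ (r / 4) ^ 2 := sq_le_sq' (by linarith [(abs_lt.1 h1.2).1]) (abs_lt.1 h1.2).2.le
      rw [rho]
      nlinarith
    · have h1 : (r * V0) ^ 2 ≤ (1 / 6) ^ 2 := pow_le_pow_left₀ (by positivity) hrV 2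
      have h2 : r ^ 2 ≤ (1 / 12) ^ 2 := pow_le_pow_left₀ hr0.le hrh 2
      have h3 : r ^ 2 * (r * V0) ^ 2 ≤ (1 / 12) ^ 2 * (1 / 6) ^ 2 :=
        mul_le_mul h2 h1 (by positivity) (by positivity)
      nlinarith
    · intro x hx
      have h1 := hpde x (hqW hx)
      have h2 : lapl u x = -(((E + x.2 : ℝ) : ℂ) * u x) := eq_neg_of_add_eq_zero_left h1
      rw [h2, norm_neg, norm_mul, Complex.norm_real, Real.norm_eq_abs]
      apply mul_le_mul_of_nonneg_right _ (norm_nonneg _)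
      have h3 := hqb hx
      rw [Metric.mem_ball, Prod.dist_eq, max_lt_iff, Real.dist_eq, Real.dist_eq] at h3
      have h4 : |E + x.2| ≤ |E| + |x.2| := abs_add_le _ _
      have h5 : |x.2| ≤ |p.2| + |x.2 - p.2| := by
        have := abs_add_le p.2 (x.2 - p.2)
        simpa using this
      linarith [h3.2]
  intro p hp
  exact (hsub hp).self_of_nhds

lemma slice1 (f : ℝ × ℝ → ℂ) (x y : ℝ) (hf : DifferentiableAt ℝ f (x, y)) :
    HasDerivAt (fun t => f (t, y)) (fderiv ℝ f (x, y) (1, 0)) x :=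
  hf.hasFDerivAt.comp_hasDerivAt x ((hasDerivAt_id x).prodMk (hasDerivAt_const x y))

lemma slice2 (f : ℝ × ℝ → ℂ) (x y : ℝ) (hf : DifferentiableAt ℝ f (x, y)) :
    HasDerivAt (fun t => f (x, t)) (fderiv ℝ f (x, y) (0, 1)) y :=
  hf.hasFDerivAt.comp_hasDerivAt y ((hasDerivAt_const y x).prodMk (hasDerivAt_id y))

/-- Lemma 2 of the paper (Cartesian Rellich lemma). -/
theorem cartesian_rellich
    (E : ℝ) (Ω : Set (ℝ × ℝ)) (hΩb : Bornology.IsBounded Ω)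
    (hconn : IsConnected ((closure Ω)ᶜ))
    (u : ℝ × ℝ → ℂ)
    (hu : ContDiffOn ℝ 2 u ((closure Ω)ᶜ))
    (hpde : ∀ x ∈ (closure Ω)ᶜ, GravityHelmholtzAt E u x)
    (hint : ∀ᶠ x₂ in atTop, Integrable (fun x₁ : ℝ => ‖u (x₁, x₂)‖ ^ 2))
    (hlim : Tendsto (fun x₂ : ℝ =>
        Real.sqrt (E + x₂) * ∫ x₁ : ℝ, ‖u (x₁, x₂)‖ ^ 2) atTop (𝓝 0)) :
    ∀ x ∈ (closure Ω)ᶜ, u x = 0 := by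
  set W := (closure Ω)ᶜ with hWdef
  have hW : IsOpen W := isClosed_closure.isOpen_compl
  have du : ∀ p ∈ W, DifferentiableAt ℝ u p := fun p hp =>
    (hu.contDiffAt (hW.mem_nhds hp)).differentiableAt (by norm_num)
  have hfd : ContDiffOn ℝ 1 (fderiv ℝ u) W := hu.fderiv_of_isOpen hW (by norm_num)
  have hfv : ∀ v, ContDiffOn ℝ 1 (fun p => fderiv ℝ u p v) W := fun v =>
    hfd.clm_apply contDiffOn_const
  have dfv : ∀ v, ∀ p ∈ W, DifferentiableAt ℝ (fun p => fderiv ℝ u p v) p := fun v p hp =>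
    ((hfv v).contDiffAt (hW.mem_nhds hp)).differentiableAt (by norm_num)
  have hffv : ∀ v w, ContinuousOn (fun p => fderiv ℝ (fun p => fderiv ℝ u p v) p w) W := fun v w =>
    ((hfv v).continuousOn_fderiv_of_isOpen hW (by norm_num)).clm_apply continuousOn_const
  have hl1 : ∀ p ∈ W, pd1 u p = fderiv ℝ u p (1, 0) := fun p hp =>
    (slice1 u p.1 p.2 (du p hp)).deriv
  have hl2 : ∀ p ∈ W, pd2 u p = fderiv ℝ u p (0, 1) := fun p hp =>
    (slice2 u p.1 p.2 (du p hp)).deriv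
  have hl11 : ∀ p ∈ W, pd11 u p = fderiv ℝ (fun p => fderiv ℝ u p (1, 0)) p (1, 0) := by
    intro p hp
    have ev : (fun t : ℝ => pd1 u (t, p.2)) =ᶠ[𝓝 p.1] fun t => fderiv ℝ u (t, p.2) (1, 0) := by
      have hc : ContinuousAt (fun t : ℝ => (t, p.2)) p.1 := by fun_prop
      filter_upwards [hc (hW.mem_nhds hp)] with t ht
      exact hl1 _ ht
    rw [pd11, ev.deriv_eq]
    exact (slice1 (fun p => fderiv ℝ u p (1, 0)) p.1 p.2 (dfv _ p hp)).deriv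
  have hl22 : ∀ p ∈ W, pd22 u p = fderiv ℝ (fun p => fderiv ℝ u p (0, 1)) p (0, 1) := by
    intro p hp
    have ev : (fun t : ℝ => pd2 u (p.1, t)) =ᶠ[𝓝 p.2] fun t => fderiv ℝ u (p.1, t) (0, 1) := by
      have hc : ContinuousAt (fun t : ℝ => (p.1, t)) p.2 := by fun_prop
      filter_upwards [hc (hW.mem_nhds hp)] with t ht
      exact hl2 _ ht
    rw [pd22, ev.deriv_eq]
    exact (slice2 (fun p => fderiv ℝ u p (0, 1)) p.1 p.2 (dfv _ p hp)).deriv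
  have hpde' : ∀ p ∈ W, lapl u p + ((E + p.2 : ℝ) : ℂ) * u p = 0 := by
    intro p hp
    have := hpde p hp
    rw [GravityHelmholtzAt, hl11 p hp, hl22 p hp] at this
    exact this
  obtain ⟨M, hM⟩ := hΩb.subset_closedBall (0 : ℝ × ℝ)
  have hMc : closure Ω ⊆ Metric.closedBall 0 M := closure_minimal hM Metric.isClosed_closedBall
  have hMW : ∀ p : ℝ × ℝ, M < p.2 → p ∈ W := by
    intro p hp hc
    have := hMc hc
    rw [Metric.mem_closedBall, Prod.dist_eq, Real.dist_eq, Real.dist_eq] at this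
    have h2 := (le_max_right _ _).trans this
    have h3 := le_abs_self (p.2 - (0 : ℝ × ℝ).2)
    simp at h2 h3
    linarith
  have ev1 : ∀ᶠ x₂ : ℝ in atTop, ∫ x₁ : ℝ, ‖u (x₁, x₂)‖ ^ 2 ≤ 1 := by
    filter_upwards [hlim.eventually_lt_const one_pos, eventually_ge_atTop (1 - E)] with x h1 h2
    have h3 : 1 ≤ Real.sqrt (E + x) := Real.one_le_sqrt.2 (by linarith)
    have h4 : 0 ≤ ∫ x₁ : ℝ, ‖u (x₁, x)‖ ^ 2 := integral_nonneg fun t => by positivity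
    nlinarith
  obtain ⟨a0, ha0⟩ := eventually_atTop.1 (hint.and (ev1.and (eventually_gt_atTop M)))
  have cont : ∀ f : ℝ × ℝ → ℂ, ContinuousOn f W →
      ContinuousOn (Function.uncurry (fun x t => f (t, x))) (Set.Ioi M ×ˢ Set.univ) := by
    intro f hf
    refine hf.comp (f := fun p : ℝ × ℝ => (p.2, p.1)) (by fun_prop) ?_
    rintro p ⟨hp, -⟩
    exact hMW _ hp
  have hzero : ∀ a, a0 ≤ a → ∀ t, u (t, a) = 0 := by
    intro a ha
    have hMa := (ha0 a ha).2.2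
    exact halfplane_zero E M a hMa (fun x t => u (t, x)) (fun x t => fderiv ℝ u (t, x) (1, 0))
      (fun x t => fderiv ℝ (fun p => fderiv ℝ u p (1, 0)) (t, x) (1, 0))
      (fun x t => fderiv ℝ u (t, x) (0, 1))
      (fun x t => fderiv ℝ (fun p => fderiv ℝ u p (0, 1)) (t, x) (0, 1))
      (cont u hu.continuousOn) (cont _ (hffv _ _)) (cont _ (hfv _).continuousOn) (cont _ (hffv _ _))
      (fun x hx t => slice1 u t x (du _ (hMW _ hx)))
      (fun x hx t => slice1 (fun p => fderiv ℝ u p (1, 0)) t x (dfv _ _ (hMW _ hx)))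
      (fun x hx t => slice2 u t x (du _ (hMW _ hx)))
      (fun x hx t => slice2 (fun p => fderiv ℝ u p (0, 1)) t x (dfv _ _ (hMW _ hx)))
      (fun x hx t => hpde' (t, x) (hMW _ hx))
      (fun x hx => (ha0 x (ha.trans hx)).1) (fun x hx => (ha0 x (ha.trans hx)).2.1) hlim
  have hzW : ((0 : ℝ), a0 + 1) ∈ W := hMW _ (ha0 (a0 + 1) (by linarith)).2.2
  refine unique_cont E W hW hconn.isPreconnected u hu hpde' (0, a0 + 1) hzW ?_
  have hop : IsOpen {p : ℝ × ℝ | a0 < p.2} := isOpen_lt continuous_const continuous_snd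
  filter_upwards [hop.mem_nhds (show a0 < ((0 : ℝ), a0 + 1).2 by simp)] with p hp
  exact hzero p.2 (le_of_lt hp) p.1
end

section
/- Classically allowed and forbidden regions (the paper's Proposition 1): Let E ∈ ℝ and x = (x₁,x₂), y = (y₁,y₂) ∈ ℝ². There exist a time t ≥ 0 and an initial momentum ρ = (ρ₁,ρ₂) ∈ ℝ² with ρ₁² + ρ₂² = E + y₂, x₁ = y₁ + 2ρ₁t and x₂ = y₂ + 2ρ₂t + t², if and only if |x − y| ≤ x₂ + y₂ + 2E. Equivalently: rays launched from y at energy E cannot reach any point of the forbidden region { x : |x − y|/2 > (x₂ + y₂)/2 + E } (whose boundary is the parabola with focus y and directrix x₂ = −y₂ − 2E), and can reach every point of its complement. -/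
/-- Proposition 1 of the paper: a classical ray launched from `y = (y₁,y₂)` at
energy `E` (i.e. with initial momentum `ρ` satisfying `ρ₁² + ρ₂² = E + y₂`,
following the trajectory `t ↦ (y₁ + 2ρ₁t, y₂ + 2ρ₂t + t²)`) can reach the
target `x = (x₁,x₂)` if and only if `|x − y| ≤ x₂ + y₂ + 2E`; the forbidden
region is `|x − y|/2 > (x₂ + y₂)/2 + E`. -/
theorem classically_allowed_iff
    (E x₁ x₂ y₁ y₂ : ℝ) :
    (∃ t : ℝ, 0 ≤ t ∧ ∃ ρ₁ ρ₂ : ℝ,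
        ρ₁ ^ 2 + ρ₂ ^ 2 = E + y₂ ∧
        x₁ = y₁ + 2 * ρ₁ * t ∧
        x₂ = y₂ + 2 * ρ₂ * t + t ^ 2) ↔
      Real.sqrt ((x₁ - y₁) ^ 2 + (x₂ - y₂) ^ 2) ≤ x₂ + y₂ + 2 * E := by
  constructor
  · rintro ⟨t, ht, a, b, h, h1, h2⟩
    have hE : E = a ^ 2 + b ^ 2 - y₂ := by linarith
    subst hE
    subst h1
    subst h2
    apply Real.sqrt_le_iff.mpr
    constructor
    · nlinarith [sq_nonneg (b + t), sq_nonneg a, sq_nonneg b]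
    · nlinarith [sq_nonneg (2 * b * t + 2 * (a ^ 2 + b ^ 2))]
  · intro h
    obtain ⟨hS, hR⟩ := Real.sqrt_le_iff.mp h
    obtain ⟨q, hq, hq2⟩ : ∃ q : ℝ, 0 ≤ q ∧
        q ^ 2 = (x₂ + y₂ + 2 * E) ^ 2 - ((x₁ - y₁) ^ 2 + (x₂ - y₂) ^ 2) :=
      ⟨_, Real.sqrt_nonneg _, Real.sq_sqrt (by linarith)⟩
    have hs : 0 ≤ x₂ + y₂ + 2 * E + q := by linarith
    rcases hs.eq_or_lt with h0 | hpos
    · have hS0 : x₂ + y₂ + 2 * E = 0 := by linarith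
      rw [hS0] at hR
      have e1 : x₁ - y₁ = 0 := by
        apply pow_eq_zero_iff (two_ne_zero) |>.mp
        nlinarith [sq_nonneg (x₁ - y₁), sq_nonneg (x₂ - y₂)]
      have e2 : x₂ - y₂ = 0 := by
        apply pow_eq_zero_iff (two_ne_zero) |>.mp
        nlinarith [sq_nonneg (x₁ - y₁), sq_nonneg (x₂ - y₂)]
      exact ⟨0, le_rfl, 0, 0, by linarith, by linarith, by linarith⟩
    · obtain ⟨t, ht, ht2⟩ : ∃ t : ℝ, 0 < t ∧ t ^ 2 = x₂ + y₂ + 2 * E + q :=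
        ⟨_, Real.sqrt_pos.mpr hpos, Real.sq_sqrt hs⟩
      refine ⟨t, ht.le, (x₁ - y₁) / (2 * t), (x₂ - y₂ - t ^ 2) / (2 * t), ?_, ?_, ?_⟩
      · rw [div_pow, div_pow, ← add_div, div_eq_iff (by positivity), mul_pow, ht2]
        linear_combination hq2
      · field_simp
        ring
      · field_simp
        ring
end

section
/- Travel-time quartic equation: Let E ∈ ℝ, x = (x₁,x₂), y = (y₁,y₂) ∈ ℝ², and t > 0. Set a := |x − y|²/4 and b := (x₂ + y₂)/2 + E. Then there exists ρ = (ρ₁,ρ₂) ∈ ℝ² with ρ₁² + ρ₂² = E + y₂, x₁ = y₁ + 2ρ₁t and x₂ = y₂ + 2ρ₂t + t², if and only if t⁴/4 − b·t² + a = 0. (Moreover, when the quartic holds, ρ is uniquely given by ρ₁ = (x₁ − y₁)/(2t) and ρ₂ = (x₂ − y₂ − t²)/(2t).) -/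
/-- Travel-time quartic equation: for `t > 0`, a ray from `y` at energy `E`
reaches `x` in time exactly `t` iff `t⁴/4 − b·t² + a = 0`, where
`a = |x − y|²/4` and `b = (x₂ + y₂)/2 + E`; moreover the initial momentum is
then uniquely `ρ₁ = (x₁ − y₁)/(2t)`, `ρ₂ = (x₂ − y₂ − t²)/(2t)`. -/
theorem travel_time_quartic
    (E x₁ x₂ y₁ y₂ t a b : ℝ) (ht : 0 < t)
    (ha : a = ((x₁ - y₁) ^ 2 + (x₂ - y₂) ^ 2) / 4)
    (hb : b = (x₂ + y₂) / 2 + E) :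
    ((∃ ρ₁ ρ₂ : ℝ,
        ρ₁ ^ 2 + ρ₂ ^ 2 = E + y₂ ∧
        x₁ = y₁ + 2 * ρ₁ * t ∧
        x₂ = y₂ + 2 * ρ₂ * t + t ^ 2) ↔
      t ^ 4 / 4 - b * t ^ 2 + a = 0) ∧
    (t ^ 4 / 4 - b * t ^ 2 + a = 0 →
      ∀ ρ₁ ρ₂ : ℝ,
        (ρ₁ ^ 2 + ρ₂ ^ 2 = E + y₂ ∧
          x₁ = y₁ + 2 * ρ₁ * t ∧
          x₂ = y₂ + 2 * ρ₂ * t + t ^ 2) →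
        ρ₁ = (x₁ - y₁) / (2 * t) ∧ ρ₂ = (x₂ - y₂ - t ^ 2) / (2 * t)) := by
  have ht0 : t ≠ 0 := ht.ne'
  subst ha hb
  refine ⟨⟨?_, ?_⟩, ?_⟩
  · rintro ⟨ρ₁, ρ₂, h, rfl, rfl⟩
    linear_combination t ^ 2 * h
  · intro h
    refine ⟨(x₁ - y₁) / (2 * t), (x₂ - y₂ - t ^ 2) / (2 * t), ?_, ?_, ?_⟩
    · rw [div_pow, div_pow, ← add_div, div_eq_iff (by positivity)]
      linear_combination 4 * h
    · field_simp
      ring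
    · field_simp
      ring
  · rintro - ρ₁ ρ₂ ⟨-, h1, h2⟩
    constructor
    · rw [eq_div_iff (by positivity)]
      linear_combination -h1
    · rw [eq_div_iff (by positivity)]
      linear_combination -h2
end

section
/- The explicit propagator solves the time-dependent Schrödinger equation in a linear potential (key step in the paper's Lemma 1, two-dimensional case): Fix y = (y₁,y₂) ∈ ℝ², and for t > 0 and (x₁,x₂) ∈ ℝ² define Φ̃(x₁,x₂,t) := (1/(4πt)) · exp( i·( ((x₁−y₁)² + (x₂−y₂)²)/(4t) + ((x₂+y₂)/2)·t − t³/12 ) ). Then for every t > 0 and every (x₁,x₂) ∈ ℝ², ∂²Φ̃/∂x₁² + ∂²Φ̃/∂x₂² + i·∂Φ̃/∂t + x₂·Φ̃ = 0. -/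
open Real

/-- Derivative of an amplitude times a phase factor. -/
lemma phase_deriv {c S : ℝ → ℝ} {c' S' s : ℝ} (hc : HasDerivAt c c' s)
    (hS : HasDerivAt S S' s) :
    HasDerivAt (fun z : ℝ => (c z : ℂ) * Complex.exp (Complex.I * (S z : ℂ)))
      ((c' : ℂ) * Complex.exp (Complex.I * (S s : ℂ)) +
        (c s : ℂ) * (Complex.exp (Complex.I * (S s : ℂ)) * (Complex.I * (S' : ℂ)))) s :=
  hc.ofReal_comp.mul (hS.ofReal_comp.const_mul Complex.I).cexp

/-- The explicit propagator `Φ̃(x₁,x₂,t) = (1/(4πt)) · exp(i(|x−y|²/(4t) +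
((x₂+y₂)/2)t − t³/12))` solves the time-dependent Schrödinger equation in a
linear potential: `ΔΦ̃ + i ∂Φ̃/∂t + x₂·Φ̃ = 0` for all `t > 0` and all
`(x₁,x₂) ∈ ℝ²` (key step in Lemma 1 of the paper, two-dimensional case). -/
theorem propagator_solves_schrodinger
    (y₁ y₂ : ℝ) (Φ : ℝ → ℝ → ℝ → ℂ)
    (hΦ : ∀ x₁ x₂ t : ℝ, Φ x₁ x₂ t =
      ((1 / (4 * Real.pi * t) : ℝ) : ℂ) *
        Complex.exp (Complex.I *
          ((((x₁ - y₁) ^ 2 + (x₂ - y₂) ^ 2) / (4 * t)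
            + ((x₂ + y₂) / 2) * t - t ^ 3 / 12 : ℝ) : ℂ))) :
    ∀ t : ℝ, 0 < t → ∀ x₁ x₂ : ℝ,
      deriv (fun s : ℝ => deriv (fun s' : ℝ => Φ s' x₂ t) s) x₁ +
      deriv (fun s : ℝ => deriv (fun s' : ℝ => Φ x₁ s' t) s) x₂ +
      Complex.I * deriv (fun s : ℝ => Φ x₁ x₂ s) t +
      (x₂ : ℂ) * Φ x₁ x₂ t = 0 := by
  intro t ht x₁ x₂
  have htne : t ≠ 0 := ht.ne'
  have hD1 : ∀ s : ℝ, HasDerivAt (fun s' : ℝ => Φ s' x₂ t)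
      (Complex.I * (((s - y₁) / (2 * t) : ℝ) : ℂ) * Φ s x₂ t) s := by
    intro s
    have hS : HasDerivAt (fun s' : ℝ => ((s' - y₁) ^ 2 + (x₂ - y₂) ^ 2) / (4 * t)
        + ((x₂ + y₂) / 2) * t - t ^ 3 / 12) ((s - y₁) / (2 * t)) s := by
      have h := (((((hasDerivAt_id s).sub_const y₁).pow 2).add_const
        ((x₂ - y₂) ^ 2)).div_const (4 * t)).add_const (((x₂ + y₂) / 2) * t - t ^ 3 / 12)
      refine (h.congr_deriv ?_).congr_of_eventuallyEq (.of_forall fun z => ?_)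
      · simp; field_simp; ring
      · simp; ring
    simp only [hΦ]
    refine (phase_deriv (hasDerivAt_const s _) hS).congr_deriv ?_
    simp only [Complex.ofReal_zero]
    ring
  have hD2 : ∀ s : ℝ, HasDerivAt (fun s' : ℝ => Φ x₁ s' t)
      (Complex.I * (((s - y₂) / (2 * t) + t / 2 : ℝ) : ℂ) * Φ x₁ s t) s := by
    intro s
    have hS : HasDerivAt (fun s' : ℝ => ((x₁ - y₁) ^ 2 + (s' - y₂) ^ 2) / (4 * t)
        + ((s' + y₂) / 2) * t - t ^ 3 / 12) ((s - y₂) / (2 * t) + t / 2) s := by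
      have h := ((((((hasDerivAt_id s).sub_const y₂).pow 2).const_add
        ((x₁ - y₁) ^ 2)).div_const (4 * t)).add
        ((((hasDerivAt_id s).add_const y₂).div_const 2).mul_const t)).sub_const (t ^ 3 / 12)
      refine (h.congr_deriv ?_).congr_of_eventuallyEq (.of_forall fun z => ?_)
      · simp; field_simp; ring
      · simp
    simp only [hΦ]
    refine (phase_deriv (hasDerivAt_const s _) hS).congr_deriv ?_
    simp only [Complex.ofReal_zero]
    ring
  have hD3 : HasDerivAt (fun s : ℝ => Φ x₁ x₂ s)
      ((-(1 / t : ℝ) + Complex.I * ((-((x₁ - y₁) ^ 2 + (x₂ - y₂) ^ 2) / (4 * t ^ 2)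
        + (x₂ + y₂) / 2 - t ^ 2 / 4 : ℝ) : ℂ)) * Φ x₁ x₂ t) t := by
    have hS : HasDerivAt (fun s : ℝ => ((x₁ - y₁) ^ 2 + (x₂ - y₂) ^ 2) / (4 * s)
        + ((x₂ + y₂) / 2) * s - s ^ 3 / 12) (-((x₁ - y₁) ^ 2 + (x₂ - y₂) ^ 2) / (4 * t ^ 2)
        + (x₂ + y₂) / 2 - t ^ 2 / 4) t := by
      have h := (((hasDerivAt_const t ((x₁ - y₁) ^ 2 + (x₂ - y₂) ^ 2)).div
        ((hasDerivAt_id t).const_mul 4) (by simpa using htne)).add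
        ((hasDerivAt_id t).const_mul ((x₂ + y₂) / 2))).sub
        (((hasDerivAt_id t).pow 3).div_const 12)
      refine (h.congr_deriv ?_).congr_of_eventuallyEq (.of_forall fun z => ?_)
      · simp; field_simp; ring
      · simp
    have hc : HasDerivAt (fun s : ℝ => 1 / (4 * Real.pi * s))
        (-(1 / t) * (1 / (4 * Real.pi * t))) t := by
      have h := (hasDerivAt_const t (1 : ℝ)).div
        ((hasDerivAt_id t).const_mul (4 * Real.pi))
        (by simpa [Real.pi_ne_zero] using htne)
      refine h.congr_deriv ?_
      have := Real.pi_ne_zero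
      simp; field_simp
    simp only [hΦ]
    refine (phase_deriv hc hS).congr_deriv ?_
    rw [Complex.ofReal_mul, Complex.ofReal_neg]
    ring
  have e1 : (fun s : ℝ => deriv (fun s' : ℝ => Φ s' x₂ t) s) =
      fun s => Complex.I * (((s - y₁) / (2 * t) : ℝ) : ℂ) * Φ s x₂ t :=
    funext fun s => (hD1 s).deriv
  have e2 : (fun s : ℝ => deriv (fun s' : ℝ => Φ x₁ s' t) s) =
      fun s => Complex.I * (((s - y₂) / (2 * t) + t / 2 : ℝ) : ℂ) * Φ x₁ s t :=
    funext fun s => (hD2 s).deriv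
  have l1 : HasDerivAt (fun s : ℝ => (s - y₁) / (2 * t)) (1 / (2 * t)) x₁ :=
    ((hasDerivAt_id x₁).sub_const y₁).div_const (2 * t)
  have l2 : HasDerivAt (fun s : ℝ => (s - y₂) / (2 * t) + t / 2) (1 / (2 * t)) x₂ :=
    (((hasDerivAt_id x₂).sub_const y₂).div_const (2 * t)).add_const (t / 2)
  have d1 := ((l1.ofReal_comp.const_mul Complex.I).mul (hD1 x₁)).deriv
  have d2 := ((l2.ofReal_comp.const_mul Complex.I).mul (hD2 x₂)).deriv
  rw [e1, e2, hD3.deriv]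
  erw [d1, d2]
  have htc : (t : ℂ) ≠ 0 := by exact_mod_cast htne
  generalize Φ x₁ x₂ t = F
  push_cast
  field_simp
  ring_nf
  simp only [Complex.I_sq]
  ring
end
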